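/- There exists an absolute constant C > 0 such that for every q ≥ 1, every dimension d ∈ ℕ and every f ∈ ℓ^2(ℤ^d), one has ‖ sup_{t ∈ 𝔻, t ≤ d^{1/q}} |𝓜_t^q f| ‖_{ℓ^2(ℤ^d)} ≤ C ‖f‖_{ℓ^2(ℤ^d)}. -/

import Mathlib

open scoped ENNReal NNReal

open Classical in
noncomputable def latticeBall (q : ℝ) (d : ℕ) (t : ℝ) : Finset (Fin d → ℤ) :=
  (Finset.Icc (fun _ => -(⌈t⌉₊ : ℤ)) (fun _ => (⌈t⌉₊ : ℤ))).filter
    (fun x => ∑ i, |(x i : ℝ)| ^ q ≤ t ^ q)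

noncomputable def avgOp (q : ℝ) (d : ℕ) (t : ℝ) (f : (Fin d → ℤ) → ℂ) (x : Fin d → ℤ) : ℂ :=
  ((latticeBall q d t).card : ℂ)⁻¹ * ∑ y ∈ latticeBall q d t, f (x - y)

noncomputable def l2Norm {d : ℕ} (g : (Fin d → ℤ) → ℝ≥0∞) : ℝ≥0∞ :=
  (∑' x, g x ^ (2 : ℝ)) ^ ((1 : ℝ) / 2)

/-!
For `N = t ^ q ≤ d` let `K_N` be the average over the ball and `Q` the lazy simple random walk on
`ℤ^d`. A pointwise comparison of `K_N f` with `Q K_N f`, for `f ≥ 0`, lets us replace `K_N` by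
`Q K_N`, which is in turn compared with the Cesàro mean of the powers of `Q` up to `⌊N⌋`.

* The maximal function of the Cesàro means of a symmetric Markov operator is bounded on `ℓ²` with an
  absolute constant: the semigroup property bounds `T T*`, for the linearized maximal operator `T`,
  by the maximal operator itself, which improves any a priori bound `A` to `A / 2 + 16`.
* The differences are controlled by a square function. Writing `1 - λ` for the multiplier of `Q`,
  the difference at `N` has a multiplier of size `min (N λ) (1 / (N λ)) + N / d` up to constants,
  and its squares have a bounded sum over dyadic `t`, because `N` at least doubles from one `t` to
  the next. The decay of the multiplier of `K_N` comes from averaging over permutations of the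
  coordinates: swapping disjoint pairs of coordinates gains a factor for each pair on which the
  character varies, and a second moment computation counts such pairs.
-/

open scoped BigOperators AddMonoidAlgebra
open AddMonoidAlgebra (single)
open MeasureTheory UnitAddTorus

/-! ### Convolution on a commutative group -/

section Convolution

variable {G : Type*}

/-- The squared `ℓ²` norm of a finitely supported function. -/
noncomputable def sqNorm (u : ℝ[G]) : ℝ := ∑ x ∈ u.coeff.support, u.coeff x ^ 2

/-- The restriction of `h` to the finite set `X`, as an element of the group algebra. -/
noncomputable def restrict (X : Finset G) (h : G → ℝ) : ℝ[G] := ∑ x ∈ X, single x (h x)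

lemma coeff_restrict [DecidableEq G] (X : Finset G) (h : G → ℝ) (x : G) :
    (restrict X h).coeff x = if x ∈ X then h x else 0 := by
  simp [restrict, Finsupp.single_apply]

lemma restrict_support_coeff (u : ℝ[G]) : restrict u.coeff.support u.coeff = u :=
  AddMonoidAlgebra.sum_coeff_single u

lemma coeff_restrict_nonneg {X : Finset G} {h : G → ℝ} (h0 : ∀ x ∈ X, 0 ≤ h x) :
    0 ≤ (restrict X h).coeff := by
  classical
  intro x
  rw [coeff_restrict]
  split_ifs with hx
  exacts [h0 x hx, le_rfl]

lemma sqNorm_nonneg (u : ℝ[G]) : 0 ≤ sqNorm u :=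
  Finset.sum_nonneg fun _ _ => sq_nonneg _

lemma sqNorm_eq_sum_of_support_subset {u : ℝ[G]} {X : Finset G} (hX : u.coeff.support ⊆ X) :
    sqNorm u = ∑ x ∈ X, u.coeff x ^ 2 :=
  Finset.sum_subset hX fun x _ hx => by rw [Finsupp.notMem_support_iff.mp hx, sq, zero_mul]

lemma sum_sq_coeff_le_sqNorm (u : ℝ[G]) (X : Finset G) : ∑ x ∈ X, u.coeff x ^ 2 ≤ sqNorm u := by
  classical
  rw [sqNorm_eq_sum_of_support_subset (Finset.subset_union_left (s₂ := X))]
  exact Finset.sum_le_sum_of_subset_of_nonneg Finset.subset_union_right fun _ _ _ => sq_nonneg _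

lemma sqNorm_restrict (X : Finset G) (h : G → ℝ) : sqNorm (restrict X h) = ∑ x ∈ X, h x ^ 2 := by
  classical
  have hX : (restrict X h).coeff.support ⊆ X := fun x hx => by
    rw [Finsupp.mem_support_iff, coeff_restrict, ite_ne_right_iff] at hx
    exact hx.1
  rw [sqNorm_eq_sum_of_support_subset hX]
  exact Finset.sum_congr rfl fun x hx => by rw [coeff_restrict, if_pos hx]

variable [AddCommGroup G]

/-- The reflection `u ↦ u(-·)` of the group algebra. Convolution by `reflect u` is the adjoint of
convolution by `u`, and `(u * reflect v).coeff 0` is the `ℓ²` inner product of `u` and `v`. -/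
noncomputable def reflect : ℝ[G] ≃ₐ[ℝ] ℝ[G] :=
  AddMonoidAlgebra.domCongr ℝ ℝ (AddEquiv.neg G)

lemma coeff_reflect (u : ℝ[G]) (x : G) : (reflect u).coeff x = u.coeff (-x) := by
  rw [reflect, AddMonoidAlgebra.coeff_domCongr]
  rfl

lemma reflect_single (x : G) (a : ℝ) : reflect (single x a) = single (-x) a := by
  rw [reflect, AddMonoidAlgebra.domCongr_single]
  rfl

lemma coeff_restrict_mul (X : Finset G) (h : G → ℝ) (u : ℝ[G]) (x : G) :
    (restrict X h * u).coeff x = ∑ y ∈ X, h y * u.coeff (x - y) := by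
  simp [restrict, Finset.sum_mul, AddMonoidAlgebra.coeff_single_mul_apply, neg_add_eq_sub]

lemma coeff_mul_eq_sum_support (u v : ℝ[G]) (x : G) :
    (u * v).coeff x = ∑ y ∈ u.coeff.support, u.coeff y * v.coeff (x - y) := by
  rw [← coeff_restrict_mul, restrict_support_coeff]

lemma coeff_mul_reflect_zero (u v : ℝ[G]) :
    (u * reflect v).coeff 0 = ∑ x ∈ u.coeff.support, u.coeff x * v.coeff x := by
  simp [coeff_mul_eq_sum_support, coeff_reflect]

lemma coeff_mul_reflect_self_zero (u : ℝ[G]) : (u * reflect u).coeff 0 = sqNorm u := by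
  simp [coeff_mul_reflect_zero, sqNorm, sq]

lemma sq_coeff_mul_reflect_zero_le (u v : ℝ[G]) :
    (u * reflect v).coeff 0 ^ 2 ≤ sqNorm u * sqNorm v := by
  rw [coeff_mul_reflect_zero]
  calc (∑ x ∈ u.coeff.support, u.coeff x * v.coeff x) ^ 2
      ≤ sqNorm u * ∑ x ∈ u.coeff.support, v.coeff x ^ 2 := Finset.sum_mul_sq_le_sq_mul_sq _ _ _
    _ ≤ sqNorm u * sqNorm v :=
      mul_le_mul_of_nonneg_left (sum_sq_coeff_le_sqNorm v _) (sqNorm_nonneg u)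

lemma coeff_mul_nonneg {u v : ℝ[G]} (hu : 0 ≤ u.coeff) (hv : 0 ≤ v.coeff) :
    0 ≤ (u * v).coeff := fun x => by
  rw [coeff_mul_eq_sum_support]
  exact Finset.sum_nonneg fun _ _ => mul_nonneg (hu _) (hv _)

lemma coeff_mul_le_coeff_mul_right {u v w : ℝ[G]} (huv : u.coeff ≤ v.coeff) (hw : 0 ≤ w.coeff) :
    (u * w).coeff ≤ (v * w).coeff := by
  have huv' : 0 ≤ (v - u).coeff := by simpa using huv
  simpa [sub_mul] using coeff_mul_nonneg huv' hw

lemma coeff_pow_nonneg {u : ℝ[G]} (hu : 0 ≤ u.coeff) (n : ℕ) : 0 ≤ (u ^ n).coeff := by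
  induction n with
  | zero =>
    rw [pow_zero, AddMonoidAlgebra.one_def, AddMonoidAlgebra.coeff_single]
    exact Finsupp.single_nonneg.mpr zero_le_one
  | succ n ih =>
    rw [pow_succ]
    exact coeff_mul_nonneg ih hu

end Convolution

/-! ### The maximal function of Cesàro means -/

section Cesaro

/-- The Cesàro mean `(1 + a + ⋯ + a ^ (n - 1)) / n`; it is `0` for `n = 0`. -/
noncomputable def cesaro {A : Type*} [Ring A] [Algebra ℝ A] (a : A) (n : ℕ) : A :=
  (n : ℝ)⁻¹ • ∑ k ∈ Finset.range n, a ^ k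

lemma map_cesaro {A B : Type*} [Ring A] [Algebra ℝ A] [Ring B] [Algebra ℝ B] (φ : A →ₐ[ℝ] B)
    (a : A) (n : ℕ) : φ (cesaro a n) = cesaro (φ a) n := by
  simp only [cesaro, map_smul, map_sum, map_pow]

variable {G : Type*} [AddCommGroup G] {Q : ℝ[G]}

lemma coeff_cesaro (Q : ℝ[G]) (n : ℕ) (x : G) :
    (cesaro Q n).coeff x = (n : ℝ)⁻¹ * ∑ k ∈ Finset.range n, (Q ^ k).coeff x := by
  simp [cesaro]

lemma coeff_cesaro_nonneg (hQ : 0 ≤ Q.coeff) (n : ℕ) : 0 ≤ (cesaro Q n).coeff := fun x => by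
  rw [coeff_cesaro]
  exact mul_nonneg (by positivity) (Finset.sum_nonneg fun k _ => coeff_pow_nonneg hQ k x)

lemma coeff_cesaro_mul_nonneg (hQ : 0 ≤ Q.coeff) {f : ℝ[G]} (hf : 0 ≤ f.coeff) (n : ℕ) :
    0 ≤ (cesaro Q n * f).coeff :=
  coeff_mul_nonneg (coeff_cesaro_nonneg hQ n) hf

lemma reflect_cesaro (hr : reflect Q = Q) (n : ℕ) : reflect (cesaro Q n) = cesaro Q n := by
  simpa [hr] using map_cesaro (reflect (G := G)).toAlgHom Q n

lemma coeff_cesaro_mul_cesaro_le_of_le (hQ : 0 ≤ Q.coeff) {n m : ℕ} (hn : 1 ≤ n) (hnm : n ≤ m)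
    (x : G) : (cesaro Q n * cesaro Q m).coeff x ≤ 2 * (cesaro Q (2 * m)).coeff x := by
  have hshift : ∀ i ∈ Finset.range n, ∑ j ∈ Finset.range m, (Q ^ (i + j)).coeff x ≤
      ∑ k ∈ Finset.range (2 * m), (Q ^ k).coeff x := fun i hi => by
    have hi' := Finset.mem_range.mp hi
    rw [← Finset.sum_image (f := fun k => (Q ^ k).coeff x) (add_right_injective i).injOn]
    refine Finset.sum_le_sum_of_subset_of_nonneg (fun k hk => ?_)
      fun k _ _ => coeff_pow_nonneg hQ k x
    simp only [Finset.mem_image, Finset.mem_range] at hk ⊢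
    omega
  have : (0 : ℝ) < n := by exact_mod_cast hn
  have : (0 : ℝ) < m := by exact_mod_cast hn.trans hnm
  calc (cesaro Q n * cesaro Q m).coeff x
      = (n : ℝ)⁻¹ * (m : ℝ)⁻¹ *
          ∑ i ∈ Finset.range n, ∑ j ∈ Finset.range m, (Q ^ (i + j)).coeff x := by
        simp [cesaro, Finset.sum_mul_sum, pow_add, mul_left_comm (m : ℝ)⁻¹, mul_assoc]
    _ ≤ (n : ℝ)⁻¹ * (m : ℝ)⁻¹ * (n * ∑ k ∈ Finset.range (2 * m), (Q ^ k).coeff x) := by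
        gcongr
        simpa using Finset.sum_le_card_nsmul _ _ _ hshift
    _ = 2 * (cesaro Q (2 * m)).coeff x := by
        rw [coeff_cesaro]
        push_cast
        field_simp

lemma coeff_cesaro_mul_cesaro_le (hQ : 0 ≤ Q.coeff) {n m : ℕ} (hn : 1 ≤ n) (hm : 1 ≤ m) (x : G) :
    (cesaro Q n * cesaro Q m).coeff x ≤
      2 * ((cesaro Q (2 * n)).coeff x + (cesaro Q (2 * m)).coeff x) := by
  have hn2 : 0 ≤ (cesaro Q (2 * n)).coeff x := coeff_cesaro_nonneg hQ _ x
  have hm2 : 0 ≤ (cesaro Q (2 * m)).coeff x := coeff_cesaro_nonneg hQ _ x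
  rcases le_total n m with h | h
  · linarith [coeff_cesaro_mul_cesaro_le_of_le hQ hn h x]
  · rw [mul_comm]
    linarith [coeff_cesaro_mul_cesaro_le_of_le hQ hm h x]

lemma coeff_cesaro_le_two_smul (hQ : 0 ≤ Q.coeff) {n m : ℕ} (hn : 1 ≤ n) (hnm : n ≤ m)
    (hmn : m ≤ 2 * n) : (cesaro Q n).coeff ≤ ((2 : ℝ) • cesaro Q m).coeff := fun x => by
  have hn0 : (0 : ℝ) < n := by exact_mod_cast hn
  have hm0 : (0 : ℝ) < m := by exact_mod_cast hn.trans hnm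
  have hinv : (n : ℝ)⁻¹ ≤ 2 * (m : ℝ)⁻¹ := by
    rw [← div_eq_mul_inv, inv_le_comm₀ hn0 (by positivity), inv_div, div_le_iff₀ two_pos, mul_comm]
    exact_mod_cast hmn
  have hsum : ∑ k ∈ Finset.range n, (Q ^ k).coeff x ≤ ∑ k ∈ Finset.range m, (Q ^ k).coeff x :=
    Finset.sum_le_sum_of_subset_of_nonneg (Finset.range_mono hnm)
      fun k _ _ => coeff_pow_nonneg hQ k x
  have hpos : 0 ≤ ∑ k ∈ Finset.range n, (Q ^ k).coeff x :=
    Finset.sum_nonneg fun k _ => coeff_pow_nonneg hQ k x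
  rw [AddMonoidAlgebra.coeff_smul_apply, coeff_cesaro, coeff_cesaro, smul_eq_mul, ← mul_assoc]
  exact mul_le_mul hinv hsum hpos (by positivity)

/-- `IsMaximalBound Q S A` says that the maximal function `x ↦ sup_{1 ≤ s ≤ S} (cesaro Q s * f) x`
has squared `ℓ²` norm at most `A * sqNorm f` for `f ≥ 0`. The supremum is linearized by a choice
`s x` of the parameter at each point. -/
def IsMaximalBound (Q : ℝ[G]) (S : ℕ) (A : ℝ) : Prop :=
  ∀ f : ℝ[G], 0 ≤ f.coeff → ∀ (X : Finset G) (s : G → ℕ), (∀ x ∈ X, 1 ≤ s x ∧ s x ≤ S) →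
    ∑ x ∈ X, (cesaro Q (s x) * f).coeff x ^ 2 ≤ A * sqNorm f

/-- The image of `h` under the adjoint of the linearized maximal operator
`f ↦ (x ↦ (cesaro Q (s x) * f) x)` on `X`, for symmetric `Q`. -/
noncomputable def maximalAdjoint (Q : ℝ[G]) (X : Finset G) (s : G → ℕ) (h : G → ℝ) : ℝ[G] :=
  ∑ y ∈ X, single y (h y) * cesaro Q (s y)

variable {X : Finset G} {s : G → ℕ} {h : G → ℝ}

lemma coeff_mul_reflect_maximalAdjoint (hr : reflect Q = Q) (f : ℝ[G]) :
    (f * reflect (maximalAdjoint Q X s h)).coeff 0 =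
      ∑ y ∈ X, h y * (cesaro Q (s y) * f).coeff y := by
  simp [maximalAdjoint, Finset.sum_mul, reflect_single, reflect_cesaro hr, mul_comm f, mul_assoc,
    AddMonoidAlgebra.coeff_single_mul_apply]

lemma sqNorm_maximalAdjoint (hr : reflect Q = Q) :
    sqNorm (maximalAdjoint Q X s h) =
      ∑ y ∈ X, ∑ z ∈ X, h y * (h z * (cesaro Q (s y) * cesaro Q (s z)).coeff (y - z)) := by
  rw [← coeff_mul_reflect_self_zero, coeff_mul_reflect_maximalAdjoint hr]
  refine Finset.sum_congr rfl fun y _ => ?_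
  simp [maximalAdjoint, Finset.mul_sum, mul_left_comm _ (single _ _),
    AddMonoidAlgebra.coeff_single_mul_apply, neg_add_eq_sub]

-- The semigroup property bounds `cesaro Q (s y) * cesaro Q (s z)` by averages of twice the length.
lemma sqNorm_maximalAdjoint_le (hQ : 0 ≤ Q.coeff) (hr : reflect Q = Q) (hs : ∀ x ∈ X, 1 ≤ s x)
    (h0 : ∀ x ∈ X, 0 ≤ h x) :
    sqNorm (maximalAdjoint Q X s h) ≤
      4 * ∑ y ∈ X, h y * (cesaro Q (2 * s y) * restrict X h).coeff y := by
  have hswap : ∑ y ∈ X, ∑ z ∈ X, h y * (h z * (cesaro Q (2 * s z)).coeff (y - z)) =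
      ∑ y ∈ X, ∑ z ∈ X, h y * (h z * (cesaro Q (2 * s y)).coeff (y - z)) := by
    rw [Finset.sum_comm]
    refine Finset.sum_congr rfl fun y _ => Finset.sum_congr rfl fun z _ => ?_
    rw [← neg_sub, ← coeff_reflect, reflect_cesaro hr]
    ring
  calc sqNorm (maximalAdjoint Q X s h)
      ≤ ∑ y ∈ X, ∑ z ∈ X, h y * (h z * (2 * ((cesaro Q (2 * s y)).coeff (y - z) +
          (cesaro Q (2 * s z)).coeff (y - z)))) := by
        rw [sqNorm_maximalAdjoint hr]
        exact Finset.sum_le_sum fun y hy => Finset.sum_le_sum fun z hz =>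
          mul_le_mul_of_nonneg_left (mul_le_mul_of_nonneg_left
            (coeff_cesaro_mul_cesaro_le hQ (hs y hy) (hs z hz) _) (h0 z hz)) (h0 y hy)
    _ = 2 * (∑ y ∈ X, ∑ z ∈ X, h y * (h z * (cesaro Q (2 * s y)).coeff (y - z)) +
          ∑ y ∈ X, ∑ z ∈ X, h y * (h z * (cesaro Q (2 * s z)).coeff (y - z))) := by
        simp only [mul_add, Finset.mul_sum, Finset.sum_add_distrib, mul_left_comm _ (2 : ℝ)]
    _ = 4 * ∑ y ∈ X, h y * (cesaro Q (2 * s y) * restrict X h).coeff y := by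
        rw [hswap, ← two_mul, ← mul_assoc]
        simp only [mul_comm _ (restrict X h), coeff_restrict_mul, Finset.mul_sum]
        norm_num

lemma four_mul_sum_mul_cesaro_two_mul_le (hQ : 0 ≤ Q.coeff)
    (hc : ∀ n g, sqNorm (cesaro Q n * g) ≤ sqNorm g) {S : ℕ} {A : ℝ} (hA : IsMaximalBound Q S A)
    (hs : ∀ x ∈ X, 1 ≤ s x ∧ s x ≤ S) (h0 : ∀ x ∈ X, 0 ≤ h x) :
    4 * ∑ y ∈ X, h y * (cesaro Q (2 * s y) * restrict X h).coeff y ≤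
      (A / 2 + 16) * sqNorm (restrict X h) := by
  have hg := coeff_restrict_nonneg h0
  set g := restrict X h with hgdef
  -- Lengths beyond `S` are dominated by the single average of length `2 * S`.
  let s' : G → ℕ := fun x => if 2 * s x ≤ S then 2 * s x else 1
  have hs' : ∀ x ∈ X, 1 ≤ s' x ∧ s' x ≤ S := fun x hx => by
    have := hs x hx
    simp only [s']
    split_ifs <;> omega
  have hdom : ∀ x ∈ X, (cesaro Q (2 * s x) * g).coeff x ≤
      (cesaro Q (s' x) * g).coeff x + 2 * (cesaro Q (2 * S) * g).coeff x := fun x hx => by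
    have hshort : 0 ≤ (cesaro Q (s' x) * g).coeff x := coeff_cesaro_mul_nonneg hQ hg _ x
    have hlong : 0 ≤ (cesaro Q (2 * S) * g).coeff x := coeff_cesaro_mul_nonneg hQ hg _ x
    have := hs x hx
    rcases le_or_gt (2 * s x) S with hx' | hx'
    · simp only [s', if_pos hx']
      linarith
    · have hle := coeff_mul_le_coeff_mul_right
        (coeff_cesaro_le_two_smul hQ (n := 2 * s x) (m := 2 * S) (by omega) (by omega) (by omega))
        hg x
      rw [smul_mul_assoc, AddMonoidAlgebra.coeff_smul_apply, smul_eq_mul] at hle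
      linarith
  have hpoint : ∀ x ∈ X, 4 * (h x * (cesaro Q (2 * s x) * g).coeff x) ≤ 12 * h x ^ 2 +
      (1 / 2 * (cesaro Q (s' x) * g).coeff x ^ 2 + 4 * (cesaro Q (2 * S) * g).coeff x ^ 2) :=
    fun x hx => by
      have := mul_le_mul_of_nonneg_left (hdom x hx) (h0 x hx)
      nlinarith [sq_nonneg (4 * h x - (cesaro Q (s' x) * g).coeff x),
        sq_nonneg (h x - (cesaro Q (2 * S) * g).coeff x)]
  have hlong : ∑ x ∈ X, (cesaro Q (2 * S) * g).coeff x ^ 2 ≤ sqNorm g :=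
    (sum_sq_coeff_le_sqNorm _ X).trans (hc _ g)
  have hsum := Finset.sum_le_sum hpoint
  simp only [Finset.sum_add_distrib, ← Finset.mul_sum] at hsum
  rw [← sqNorm_restrict X h, ← hgdef] at hsum
  linarith [hA g hg X s' hs']

lemma IsMaximalBound.half_add (hQ : 0 ≤ Q.coeff) (hr : reflect Q = Q)
    (hc : ∀ n g, sqNorm (cesaro Q n * g) ≤ sqNorm g) {S : ℕ} {A : ℝ} (hA : IsMaximalBound Q S A) :
    IsMaximalBound Q S (A / 2 + 16) := by
  intro f hf X s hs
  set h : G → ℝ := fun x => (cesaro Q (s x) * f).coeff x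
  have h0 : ∀ x ∈ X, 0 ≤ h x := fun x _ => coeff_cesaro_mul_nonneg hQ hf _ x
  set T := maximalAdjoint Q X s h
  set g := restrict X h
  have hT : sqNorm T ≤ (A / 2 + 16) * sqNorm g :=
    (sqNorm_maximalAdjoint_le hQ hr (fun x hx => (hs x hx).1) h0).trans
      (four_mul_sum_mul_cesaro_two_mul_le hQ hc hA hs h0)
  have hdual : sqNorm g = (f * reflect T).coeff 0 := by
    rw [coeff_mul_reflect_maximalAdjoint hr, sqNorm_restrict]
    exact Finset.sum_congr rfl fun x _ => sq (h x)
  have hsq : sqNorm g * sqNorm g ≤ (A / 2 + 16) * sqNorm f * sqNorm g :=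
    calc sqNorm g * sqNorm g = (f * reflect T).coeff 0 ^ 2 := by rw [hdual, sq]
      _ ≤ sqNorm f * sqNorm T := sq_coeff_mul_reflect_zero_le f T
      _ ≤ sqNorm f * ((A / 2 + 16) * sqNorm g) := mul_le_mul_of_nonneg_left hT (sqNorm_nonneg f)
      _ = (A / 2 + 16) * sqNorm f * sqNorm g := by ring
  rw [← sqNorm_restrict X h]
  rcases (sqNorm_nonneg g).eq_or_lt with hg | hg
  · have hAf : 0 ≤ A * sqNorm f := by simpa using hA f hf ∅ s
    linarith [sqNorm_nonneg f]
  · exact le_of_mul_le_mul_right hsq hg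

lemma isMaximalBound_add_one (hc : ∀ n g, sqNorm (cesaro Q n * g) ≤ sqNorm g) (S : ℕ) :
    IsMaximalBound Q S (S + 1) := fun f _ X s hs =>
  calc ∑ x ∈ X, (cesaro Q (s x) * f).coeff x ^ 2
      ≤ ∑ x ∈ X, ∑ k ∈ Finset.range (S + 1), (cesaro Q k * f).coeff x ^ 2 :=
        Finset.sum_le_sum fun x hx =>
          Finset.single_le_sum (f := fun k => (cesaro Q k * f).coeff x ^ 2)
            (fun _ _ => sq_nonneg _) (Finset.mem_range_succ_iff.mpr (hs x hx).2)
    _ = ∑ k ∈ Finset.range (S + 1), ∑ x ∈ X, (cesaro Q k * f).coeff x ^ 2 := Finset.sum_comm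
    _ ≤ ∑ _k ∈ Finset.range (S + 1), sqNorm f :=
        Finset.sum_le_sum fun k _ => (sum_sq_coeff_le_sqNorm _ X).trans (hc k f)
    _ = (S + 1) * sqNorm f := by simp

theorem isMaximalBound_cesaro (hQ : 0 ≤ Q.coeff) (hr : reflect Q = Q)
    (hc : ∀ n g, sqNorm (cesaro Q n * g) ≤ sqNorm g) (S : ℕ) : IsMaximalBound Q S 32 := by
  have hiter : ∀ k : ℕ, IsMaximalBound Q S (32 + (S - 31 : ℝ) * (1 / 2) ^ k) := by
    intro k
    induction k with
    | zero =>
      convert isMaximalBound_add_one hc S using 1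
      ring
    | succ k ih =>
      convert ih.half_add hQ hr hc using 1
      ring
  intro f hf X s hs
  have hlim : Filter.Tendsto (fun k : ℕ => (32 + (S - 31 : ℝ) * (1 / 2) ^ k) * sqNorm f)
      Filter.atTop (nhds (32 * sqNorm f)) := by
    simpa using (((tendsto_pow_atTop_nhds_zero_of_lt_one (r := (1 / 2 : ℝ)) (by norm_num)
      (by norm_num)).const_mul (S - 31 : ℝ)).const_add 32).mul_const (sqNorm f)
  exact ge_of_tendsto' hlim fun k => hiter k f hf X s hs

end Cesaro

/-! ### Averages over permutations -/

section Permutations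

lemma expect_smul_eq_expect {Γ Z : Type*} [Group Γ] [Fintype Γ] [Fintype Z] [MulAction Γ Z]
    [MulAction.IsPretransitive Γ Z] (h : Z → ℝ) (x : Z) : 𝔼 g : Γ, h (g • x) = 𝔼 z, h z := by
  have hx : ∀ z : Z, 𝔼 g : Γ, h (g • z) = 𝔼 g : Γ, h (g • x) := fun z => by
    obtain ⟨k, rfl⟩ := MulAction.exists_smul_eq Γ x z
    exact Fintype.expect_equiv (Equiv.mulRight k) _ _ fun g => by simp [mul_smul]
  have hg : ∀ g : Γ, 𝔼 z, h (g • z) = 𝔼 z, h z := fun g =>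
    Fintype.expect_equiv (MulAction.toPerm g) _ _ fun _ => rfl
  have : Nonempty Z := ⟨x⟩
  calc 𝔼 g : Γ, h (g • x) = 𝔼 z : Z, 𝔼 g : Γ, h (g • z) := by
        rw [Finset.expect_congr rfl fun z _ => hx z, Fintype.expect_const]
    _ = 𝔼 g : Γ, 𝔼 z : Z, h (g • z) := Finset.expect_comm ..
    _ = 𝔼 z, h z := by rw [Finset.expect_congr rfl fun g _ => hg g, Fintype.expect_const]

section Embeddings

variable {ι κ : Type*} [Fintype ι] [DecidableEq ι] [Fintype κ]

lemma expect_perm_comp_embedding (x : κ ↪ ι) (h : (κ → ι) → ℝ) :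
    𝔼 σ : Equiv.Perm ι, h (fun k => σ (x k)) = 𝔼 z : κ ↪ ι, h z :=
  have : MulAction.IsPretransitive (Equiv.Perm ι) (κ ↪ ι) :=
    ⟨Equiv.Perm.exists_smul_eq_embedding⟩
  expect_smul_eq_expect (fun z : κ ↪ ι => h z) x

lemma expect_perm_apply_pair {i j : ι} (hij : i ≠ j) (h : ι → ι → ℝ) :
    𝔼 σ : Equiv.Perm ι, h (σ i) (σ j) = (∑ a, ∑ b, h a b - ∑ a, h a a) /
      (Fintype.card ι * (Fintype.card ι - 1)) := by
  have hcard : (Fintype.card (Fin 2 ↪ ι) : ℝ) = Fintype.card ι * (Fintype.card ι - 1) := by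
    have : 1 ≤ Fintype.card ι := Fintype.card_pos_iff.mpr ⟨i⟩
    simp [Fintype.card_embedding_eq, Nat.descFactorial, Nat.cast_sub this, mul_comm]
  have hsum : ∑ z : Fin 2 ↪ ι, h (z 0) (z 1) = ∑ a, ∑ b, h a b - ∑ a, h a a := by
    rw [← Finset.sum_product', ← Finset.diag_union_offDiag,
      Finset.sum_union (Finset.disjoint_diag_offDiag _), Finset.sum_diag, add_sub_cancel_left]
    refine Finset.sum_nbij (fun z => (z 0, z 1)) (fun z _ => by simp) (fun z _ w _ hzw => ?_)
      (fun p hp => ?_) fun _ _ => rfl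
    · ext k
      fin_cases k
      exacts [congrArg Prod.fst hzw, congrArg Prod.snd hzw]
    · exact ⟨Function.Embedding.embFinTwo (Finset.mem_offDiag.mp hp).2.2, Finset.mem_univ _, rfl⟩
  rw [← hsum, ← hcard, ← Fintype.expect_eq_sum_div_card]
  exact expect_perm_comp_embedding (Function.Embedding.embFinTwo hij) fun z => h (z 0) (z 1)

lemma expect_perm_prod_le {A : κ → ι → ℝ} (hA : ∀ k i, 0 ≤ A k i) (x : κ ↪ ι) :
    𝔼 σ : Equiv.Perm ι, ∏ k, A k (σ (x k)) ≤
      (∏ k, ∑ i, A k i) / (Fintype.card ι).descFactorial (Fintype.card κ) := by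
  classical
  rw [expect_perm_comp_embedding x fun z => ∏ k, A k (z k), Fintype.expect_eq_sum_div_card,
    Fintype.card_embedding_eq, Fintype.prod_sum]
  gcongr
  calc ∑ z : κ ↪ ι, ∏ k, A k (z k)
      = ∑ z ∈ Finset.univ.map ⟨fun z : κ ↪ ι => (z : κ → ι), DFunLike.coe_injective⟩,
          ∏ k, A k (z k) := by rw [Finset.sum_map]; rfl
    _ ≤ ∑ z : κ → ι, ∏ k, A k (z k) :=
        Finset.sum_le_sum_of_subset_of_nonneg (Finset.subset_univ _)
          fun z _ _ => Finset.prod_nonneg fun k _ => hA k _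

end Embeddings

section PairSwap

variable {ι L : Type*}

lemma expect_prod_bool [Fintype L] [DecidableEq L] (g : L → Bool → ℝ) :
    𝔼 ε : L → Bool, ∏ l, g l (ε l) = ∏ l, (g l false + g l true) / 2 := by
  rw [Fintype.expect_eq_sum_div_card, ← Fintype.prod_sum, Finset.prod_div_distrib]
  simp [add_comm]

/-- The involution of `ι` exchanging `e (l, false)` and `e (l, true)` whenever `ε l` holds. -/
noncomputable def pairSwap (e : L × Bool ↪ ι) (ε : L → Bool) : Equiv.Perm ι :=
  Equiv.Perm.viaEmbedding
    ((Equiv.refl L).prodShear fun l => cond (ε l) Equiv.boolNot (Equiv.refl Bool)) e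

lemma pairSwap_apply (e : L × Bool ↪ ι) (ε : L → Bool) (l : L) (b : Bool) :
    pairSwap e ε (e (l, b)) = e (l, xor (ε l) b) := by
  rw [pairSwap, Equiv.Perm.viaEmbedding_apply]
  cases h : ε l <;> simp [Equiv.prodShear, h]

lemma pairSwap_apply_of_notMem (e : L × Bool ↪ ι) (ε : L → Bool) {i : ι}
    (hi : i ∉ Set.range e) : pairSwap e ε i = i :=
  Equiv.Perm.viaEmbedding_apply_of_notMem _ e i hi

/-- The average of `F i i'` and its transpose over the pair `(e (l, false), e (l, true))`, that is,
half the permanent of `F` on the rows `e (l, ·)` and the columns `τ (e (l, ·))`. -/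
noncomputable def pairMean (F : ι → ι → ℝ) (e : L × Bool ↪ ι) (τ : ι → ι) (l : L) : ℝ :=
  (F (e (l, false)) (τ (e (l, false))) * F (e (l, true)) (τ (e (l, true))) +
    F (e (l, false)) (τ (e (l, true))) * F (e (l, true)) (τ (e (l, false)))) / 2

variable [Fintype ι] [Fintype L] {F : ι → ι → ℝ}

lemma abs_expect_pairSwap_le [DecidableEq L] (hF : ∀ i j, |F i j| ≤ 1) (e : L × Bool ↪ ι)
    (τ : ι → ι) :
    |𝔼 ε : L → Bool, ∏ i, F i (τ (pairSwap e ε i))| ≤ ∏ l, |pairMean F e τ l| := by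
  classical
  set R : ℝ := ∏ i ∈ (Finset.univ.map e)ᶜ, F i (τ i)
  have hR : |R| ≤ 1 := by
    rw [Finset.abs_prod]
    exact Finset.prod_le_one (fun _ _ => abs_nonneg _) fun _ _ => hF _ _
  have hsplit : ∀ ε : L → Bool, ∏ i, F i (τ (pairSwap e ε i)) =
      (∏ l, F (e (l, false)) (τ (e (l, ε l))) * F (e (l, true)) (τ (e (l, !ε l)))) * R := by
    intro ε
    rw [← Finset.prod_mul_prod_compl (Finset.univ.map e), Finset.prod_map, Fintype.prod_prod_type]
    congr 1
    · simp [pairSwap_apply, mul_comm]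
    · refine Finset.prod_congr rfl fun i hi => ?_
      rw [pairSwap_apply_of_notMem e ε (by simpa using hi)]
  rw [Finset.expect_congr rfl fun ε _ => hsplit ε, ← Finset.expect_mul, expect_prod_bool fun l b =>
    F (e (l, false)) (τ (e (l, b))) * F (e (l, true)) (τ (e (l, !b))), abs_mul, Finset.abs_prod]
  exact mul_le_of_le_one_right (Finset.prod_nonneg fun _ _ => abs_nonneg _) hR

/-- The proof averages over the swaps of the pairs `e (l, ·)` before averaging over `σ`. -/
lemma abs_expect_perm_prod_le [DecidableEq ι] (hF : ∀ i j, |F i j| ≤ 1) (e : L × Bool ↪ ι) :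
    |𝔼 σ : Equiv.Perm ι, ∏ i, F i (σ i)| ≤ 𝔼 σ : Equiv.Perm ι, ∏ l, |pairMean F e σ l| := by
  classical
  have hε : ∀ ε : L → Bool, 𝔼 σ : Equiv.Perm ι, ∏ i, F i (σ (pairSwap e ε i)) =
      𝔼 σ : Equiv.Perm ι, ∏ i, F i (σ i) := fun ε =>
    Fintype.expect_equiv (Equiv.mulRight (pairSwap e ε)) _ _ fun _ => rfl
  rw [← Fintype.expect_const (ι := L → Bool) (𝔼 σ : Equiv.Perm ι, ∏ i, F i (σ i)),
    ← Finset.expect_congr rfl fun ε _ => hε ε, Finset.expect_comm]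
  exact (Finset.abs_expect_le _ _).trans
    (Finset.expect_le_expect fun σ _ => abs_expect_pairSwap_le hF e σ)

end PairSwap

end Permutations

/-! ### A second moment bound -/

section SecondMoment

lemma exp_neg_le_of_sq_sub {Z μ : ℝ} (hZ : 0 ≤ Z) (hμ : 0 < μ) :
    Real.exp (-Z) ≤ 2 / μ + 4 * (Z - μ) ^ 2 / μ ^ 2 := by
  rcases le_total (μ / 2) Z with h | h
  · have hexp : Real.exp (-Z) ≤ 2 / μ := by
      rw [Real.exp_neg, inv_le_comm₀ (Real.exp_pos _) (by positivity), inv_div]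
      linarith [Real.add_one_le_exp Z]
    exact hexp.trans (le_add_of_nonneg_right (by positivity))
  · have hexp : Real.exp (-Z) ≤ 1 := Real.exp_le_one_iff.mpr (by linarith)
    have hfar : 1 ≤ 4 * (Z - μ) ^ 2 / μ ^ 2 := by
      rw [le_div_iff₀ (by positivity)]
      nlinarith
    exact (hexp.trans hfar).trans (le_add_of_nonneg_left (by positivity))

variable {Ω L : Type*} [Fintype Ω] [Nonempty Ω] [Fintype L] {w : L → ℝ} {E : L → Ω → ℝ} {p δ : ℝ}

lemma expect_sq_sub_le (hw0 : ∀ l, 0 ≤ w l) (hw1 : ∀ l, w l ≤ 1)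
    (hE : ∀ l ω, E l ω ∈ Set.Icc 0 1) (hp : ∀ l, 𝔼 ω, E l ω = p) (hδ : 0 ≤ δ)
    (hpair : ∀ l m, l ≠ m → 𝔼 ω, E l ω * E m ω ≤ p ^ 2 * (1 + δ)) :
    𝔼 ω, (∑ l, w l * E l ω - p * ∑ l, w l) ^ 2 ≤ p * ∑ l, w l + δ * (p * ∑ l, w l) ^ 2 := by
  classical
  set W := ∑ l, w l with hW
  have hterm : ∀ l m, w l * w m * 𝔼 ω, E l ω * E m ω ≤
      (if l = m then w l * p else 0) + w l * w m * (p ^ 2 * (1 + δ)) := by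
    intro l m
    have hww := mul_nonneg (hw0 l) (hw0 m)
    split_ifs with hlm
    · subst hlm
      have hdiag : 𝔼 ω, E l ω * E l ω ≤ p := (hp l) ▸ Finset.expect_le_expect fun ω _ =>
        mul_le_of_le_one_left (hE l ω).1 (hE l ω).2
      have : w l * w l * 𝔼 ω, E l ω * E l ω ≤ w l * p :=
        mul_le_mul (mul_le_of_le_one_left (hw0 l) (hw1 l)) hdiag
          (Finset.expect_nonneg fun ω _ => mul_self_nonneg _) (hw0 l)
      exact this.trans (le_add_of_nonneg_right (by positivity))
    · rw [zero_add]
      exact mul_le_mul_of_nonneg_left (hpair l m hlm) hww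
  have hfirst : 𝔼 ω, ∑ l, w l * E l ω = p * W := by
    simp only [Finset.expect_sum_comm, ← Finset.mul_expect, hp]
    rw [← Finset.sum_mul, mul_comm]
  have hsecond : 𝔼 ω, (∑ l, w l * E l ω) ^ 2 ≤ p * W + (p * W) ^ 2 * (1 + δ) :=
    calc 𝔼 ω, (∑ l, w l * E l ω) ^ 2 = ∑ l, ∑ m, w l * w m * 𝔼 ω, E l ω * E m ω := by
          simp only [sq, Finset.sum_mul_sum, Finset.expect_sum_comm, Finset.mul_expect,
            mul_mul_mul_comm]
      _ ≤ ∑ l, ∑ m, ((if l = m then w l * p else 0) + w l * w m * (p ^ 2 * (1 + δ))) :=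
          Finset.sum_le_sum fun l _ => Finset.sum_le_sum fun m _ => hterm l m
      _ = p * W + (p * W) ^ 2 * (1 + δ) := by
          simp only [Finset.sum_add_distrib, Finset.sum_ite_eq, Finset.mem_univ, if_true,
            ← Finset.sum_mul, ← Finset.mul_sum, ← hW]
          ring
  calc 𝔼 ω, (∑ l, w l * E l ω - p * W) ^ 2
      = 𝔼 ω, (∑ l, w l * E l ω) ^ 2 - 2 * (p * W) * 𝔼 ω, ∑ l, w l * E l ω + (p * W) ^ 2 := by
        rw [Finset.mul_expect, ← Finset.expect_sub_distrib,
          ← Fintype.expect_const (ι := Ω) ((p * W) ^ 2), ← Finset.expect_add_distrib]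
        exact Finset.expect_congr rfl fun ω _ => by ring
    _ ≤ p * W + δ * (p * W) ^ 2 := by
        rw [hfirst]
        linarith

lemma expect_exp_neg_le (hw0 : ∀ l, 0 ≤ w l) (hw1 : ∀ l, w l ≤ 1)
    (hE : ∀ l ω, E l ω ∈ Set.Icc 0 1) (hp : ∀ l, 𝔼 ω, E l ω = p) (hδ : 0 ≤ δ)
    (hpair : ∀ l m, l ≠ m → 𝔼 ω, E l ω * E m ω ≤ p ^ 2 * (1 + δ)) (hμ : 0 < p * ∑ l, w l) :
    𝔼 ω, Real.exp (-∑ l, w l * E l ω) ≤ 6 / (p * ∑ l, w l) + 4 * δ := by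
  set μ := p * ∑ l, w l
  have hZ : ∀ ω, 0 ≤ ∑ l, w l * E l ω := fun ω =>
    Finset.sum_nonneg fun l _ => mul_nonneg (hw0 l) (hE l ω).1
  calc 𝔼 ω, Real.exp (-∑ l, w l * E l ω)
      ≤ 𝔼 ω, (2 / μ + 4 * (∑ l, w l * E l ω - μ) ^ 2 / μ ^ 2) :=
        Finset.expect_le_expect fun ω _ => exp_neg_le_of_sq_sub (hZ ω) hμ
    _ = 2 / μ + 4 * 𝔼 ω, (∑ l, w l * E l ω - μ) ^ 2 / μ ^ 2 := by
        simp only [Finset.expect_add_distrib, Fintype.expect_const, Finset.mul_expect,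
          mul_div_assoc]
    _ ≤ 2 / μ + 4 * ((μ + δ * μ ^ 2) / μ ^ 2) := by
        rw [← Finset.expect_div]
        gcongr
        exact expect_sq_sub_le hw0 hw1 hE hp hδ hpair
    _ = 6 / μ + 4 * δ := by
        field_simp
        ring

end SecondMoment

/-! ### Cancellation in the average of a product over permutations -/

section Orbit

lemma abs_half_add_le_exp {x y : ℝ} (hx : |x| ≤ 1) (hy : |y| ≤ 1) :
    |(x + y) / 2| ≤ Real.exp (-((1 - x * y) / 4)) := by
  have hx' : x ^ 2 ≤ 1 := (sq_le_one_iff_abs_le_one x).mpr hx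
  have hy' : y ^ 2 ≤ 1 := (sq_le_one_iff_abs_le_one y).mpr hy
  have hexp : |(x + y) / 2| ≤ Real.exp (|(x + y) / 2| - 1) := by
    linarith [Real.add_one_le_exp (|(x + y) / 2| - 1)]
  refine hexp.trans (Real.exp_le_exp.mpr ?_)
  nlinarith [sq_nonneg (|(x + y) / 2| - 1), sq_abs ((x + y) / 2)]

variable {ι L : Type*}

lemma abs_pairMean_le_one {F : ι → ι → ℝ} (hF : ∀ i j, |F i j| ≤ 1) (e : L × Bool ↪ ι)
    (τ : ι → ι) (l : L) : |pairMean F e τ l| ≤ 1 := by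
  have hmul : ∀ i j i' j', |F i j * F i' j'| ≤ 1 := fun i j i' j' => by
    rw [abs_mul]
    exact mul_le_one₀ (hF i j) (abs_nonneg _) (hF i' j')
  rw [pairMean, abs_div, abs_two, div_le_one two_pos]
  exact (abs_add_le _ _).trans ((add_le_add (hmul ..) (hmul ..)).trans_eq one_add_one_eq_two)

lemma abs_pairMean_le_exp {c : ι → ℤ → ℝ} (hc : ∀ i n, |c i n| ≤ 1) (hc0 : ∀ i, c i 0 = 1)
    (hc1 : ∀ i, c i (-1) = c i 1) (y : ι → ℤ) (e : L × Bool ↪ ι) (τ : ι → ι) (l : L) :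
    |pairMean (fun i j => c i (y j)) e τ l| ≤
      Real.exp (-((1 - c (e (l, false)) 1 * c (e (l, true)) 1) / 4 *
        ((if |y (τ (e (l, false)))| = 1 then 1 else 0) *
          if y (τ (e (l, true))) = 0 then 1 else 0))) := by
  by_cases h : |y (τ (e (l, false)))| = 1 ∧ y (τ (e (l, true))) = 0
  · have hc1' : ∀ i, c i (y (τ (e (l, false)))) = c i 1 := fun i => by
      rcases eq_or_eq_neg_of_abs_eq h.1 with h1 | h1 <;> rw [h1]
      exact hc1 i
    simp only [pairMean, hc1', h.1, h.2, hc0, if_true, mul_one, one_mul]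
    exact abs_half_add_le_exp (hc _ 1) (hc _ 1)
  · have hE : ((if |y (τ (e (l, false)))| = 1 then (1 : ℝ) else 0) *
        if y (τ (e (l, true))) = 0 then 1 else 0) = 0 := by
      rw [ite_zero_mul_ite_zero, if_neg h]
    rw [hE, mul_zero, neg_zero, Real.exp_zero]
    exact abs_pairMean_le_one (fun i j => hc i (y j)) e τ l

lemma sq_descFactorial_two_le {d : ℕ} (hd : 8 ≤ d) :
    ((d : ℝ) * (d - 1)) ^ 2 ≤ (1 + 8 / d) * d.descFactorial 4 := by
  have hd' : (8 : ℝ) ≤ d := by exact_mod_cast hd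
  have hdesc : (d.descFactorial 4 : ℝ) = d * (d - 1) * ((d - 2) * (d - 3)) := by
    simp only [Nat.descFactorial, Nat.sub_zero, mul_one]
    push_cast [Nat.cast_sub (show 1 ≤ d by omega), Nat.cast_sub (show 2 ≤ d by omega),
      Nat.cast_sub (show 3 ≤ d by omega)]
    ring
  have hpoly : (d : ℝ) ^ 2 * (d - 1) ≤ (d + 8) * ((d - 2) * (d - 3)) := by nlinarith
  calc ((d : ℝ) * (d - 1)) ^ 2 = ((d : ℝ) - 1) * ((d : ℝ) ^ 2 * (d - 1)) := by ring
    _ ≤ ((d : ℝ) - 1) * ((d + 8) * ((d - 2) * (d - 3))) :=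
        mul_le_mul_of_nonneg_left hpoly (by linarith)
    _ = (1 + 8 / (d : ℝ)) * d.descFactorial 4 := by
        rw [hdesc]
        field_simp

variable [Fintype ι] [Fintype L]

lemma expect_perm_exp_neg_le [DecidableEq ι] {w : L → ℝ} (hw0 : ∀ l, 0 ≤ w l) (hw1 : ∀ l, w l ≤ 1)
    {A B : ι → ℝ} (hA : ∀ i, A i ∈ Set.Icc 0 1) (hB : ∀ i, B i ∈ Set.Icc 0 1)
    (hAB : ∀ i, A i * B i = 0) (e : L × Bool ↪ ι) (hd : 8 ≤ Fintype.card ι) {μ : ℝ}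
    (hμ : μ = (∑ i, A i) * (∑ i, B i) / (Fintype.card ι * (Fintype.card ι - 1)) * ∑ l, w l)
    (hμ0 : 0 < μ) :
    𝔼 σ : Equiv.Perm ι, Real.exp (-∑ l, w l * (A (σ (e (l, false))) * B (σ (e (l, true))))) ≤
      6 / μ + 32 / Fintype.card ι := by
  set d := Fintype.card ι
  set p : ℝ := (∑ i, A i) * (∑ i, B i) / (d * (d - 1)) with hp
  have hd' : (8 : ℝ) ≤ d := by exact_mod_cast hd
  have hfirst : ∀ l, 𝔼 σ : Equiv.Perm ι, A (σ (e (l, false))) * B (σ (e (l, true))) = p := by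
    intro l
    rw [expect_perm_apply_pair (e.injective.ne (by simp)) fun i j => A i * B j,
      Finset.sum_eq_zero fun i _ => hAB i, sub_zero, ← Finset.sum_mul_sum]
  have hpair : ∀ l m, l ≠ m → 𝔼 σ : Equiv.Perm ι,
      A (σ (e (l, false))) * B (σ (e (l, true))) * (A (σ (e (m, false))) * B (σ (e (m, true)))) ≤
        p ^ 2 * (1 + 8 / d) := by
    intro l m hlm
    have hdesc : (0 : ℝ) < d.descFactorial 4 := by
      exact_mod_cast Nat.descFactorial_pos.mpr (by omega : 4 ≤ d)
    have hprod := expect_perm_prod_le (κ := Fin 2 × Bool) (A := fun k => cond k.2 B A)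
      (fun k i => by cases k.2; exacts [(hA i).1, (hB i).1])
      (((Function.Embedding.embFinTwo hlm).prodMap (.refl Bool)).trans e)
    simp only [Fintype.prod_prod_type, Fin.prod_univ_two, Fintype.prod_bool, cond_true, cond_false,
      Fintype.card_prod, Fintype.card_fin, Fintype.card_bool, mul_comm (B _), mul_comm (∑ i, B i)]
      at hprod
    refine hprod.trans ?_
    rw [hp, div_pow, ← sq, div_mul_eq_mul_div, mul_div_assoc, div_eq_mul_inv]
    refine mul_le_mul_of_nonneg_left ?_ (sq_nonneg _)
    rw [le_div_iff₀ (pow_pos (mul_pos (by linarith) (by linarith)) 2), inv_mul_le_iff₀' hdesc]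
    exact sq_descFactorial_two_le hd
  have := expect_exp_neg_le (δ := 8 / d) hw0 hw1
    (E := fun l (σ : Equiv.Perm ι) => A (σ (e (l, false))) * B (σ (e (l, true))))
    (fun l σ => ⟨mul_nonneg (hA _).1 (hB _).1, mul_le_one₀ (hA _).2 (hB _).1 (hB _).2⟩) hfirst
    (by positivity) hpair (hμ ▸ hμ0)
  rw [← hμ] at this
  exact this.trans_eq (by ring)

/-- The average of `(1 - a i) / 2`. When `a i` is the cosine `cos (2 π t i)`, this is the
eigenvalue at frequency `t` of `1 - Q`, for `Q` the lazy simple random walk on `ℤ ^ ι`. -/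
noncomputable def meanDefect (a : ι → ℝ) : ℝ := 𝔼 i, (1 - a i) / 2

lemma meanDefect_mul_one_sub_le_expect [DecidableEq ι] (a : ι → ℝ) {i j : ι} (hij : i ≠ j) :
    meanDefect a * (1 - meanDefect a) ≤
      𝔼 σ : Equiv.Perm ι, (1 - a (σ i) * a (σ j)) / 4 := by
  set d : ℝ := (Fintype.card ι : ℝ) with hd
  set S := ∑ i, a i with hS
  have hd2 : 2 ≤ d := by
    have := Fintype.one_lt_card_iff.mpr ⟨i, j, hij⟩
    rw [hd]
    exact_mod_cast this
  have hoff : ∑ i, ∑ j, (1 - a i * a j) / 4 = (d ^ 2 - S ^ 2) / 4 := by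
    simp [← Finset.sum_div, Finset.sum_sub_distrib, ← Finset.sum_mul_sum, sq, hS, hd]
  have hdiag : ∑ i, (1 - a i * a i) / 4 = (d - ∑ i, a i ^ 2) / 4 := by
    simp [← Finset.sum_div, Finset.sum_sub_distrib, sq, hd]
  have hmean : meanDefect a = (d - S) / (2 * d) := by
    simp [meanDefect, Fintype.expect_eq_sum_div_card, ← Finset.sum_div, hd, hS, div_div]
  have hCS : S ^ 2 / d ≤ ∑ i, a i ^ 2 := by
    rw [div_le_iff₀' (by linarith)]
    simpa [hd] using sq_sum_le_card_mul_sum_sq (s := Finset.univ) (f := a)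
  rw [expect_perm_apply_pair hij fun i j => (1 - a i * a j) / 4, hoff, hdiag, hmean, ← hd,
    le_div_iff₀ (by nlinarith)]
  calc (d - S) / (2 * d) * (1 - (d - S) / (2 * d)) * (d * (d - 1))
      = (d ^ 2 - S ^ 2 - d + S ^ 2 / d) / 4 := by
        field_simp
        ring
    _ ≤ (d ^ 2 - S ^ 2) / 4 - (d - ∑ i, a i ^ 2) / 4 := by linarith

lemma exists_perm_le_sum_pair (a : ι → ℝ) (e : L × Bool ↪ ι) :
    ∃ σ : Equiv.Perm ι, Fintype.card L * (meanDefect a * (1 - meanDefect a)) ≤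
      ∑ l, (1 - a (σ (e (l, false))) * a (σ (e (l, true)))) / 4 := by
  classical
  have hexp : Fintype.card L * (meanDefect a * (1 - meanDefect a)) ≤
      𝔼 σ : Equiv.Perm ι, ∑ l, (1 - a (σ (e (l, false))) * a (σ (e (l, true)))) / 4 := by
    rw [Finset.expect_sum_comm, ← Finset.card_univ, ← nsmul_eq_mul]
    exact Finset.card_nsmul_le_sum _ _ _ fun l _ =>
      meanDefect_mul_one_sub_le_expect a (e.injective.ne (by simp))
  obtain ⟨σ, -, hσ⟩ := Finset.exists_le_of_le_expect Finset.univ_nonempty hexp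
  exact ⟨σ, hσ⟩

lemma abs_expect_perm_prod_le_of_pairing [DecidableEq ι] {c : ι → ℤ → ℝ}
    (hc : ∀ i n, |c i n| ≤ 1) (hc0 : ∀ i, c i 0 = 1) (hc1 : ∀ i, c i (-1) = c i 1) (y : ι → ℤ)
    (e : L × Bool ↪ ι) (hd : 8 ≤ Fintype.card ι) {μ : ℝ} (hμ0 : 0 < μ)
    (hμ : μ = (Finset.univ.filter fun i => |y i| = 1).card *
      (Finset.univ.filter fun i => y i = 0).card / (Fintype.card ι * (Fintype.card ι - 1)) *
        ∑ l, (1 - c (e (l, false)) 1 * c (e (l, true)) 1) / 4) :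
    |𝔼 σ : Equiv.Perm ι, ∏ i, c i (y (σ i))| ≤ 6 / μ + 32 / Fintype.card ι := by
  have hcc : ∀ i j, |c i 1 * c j 1| ≤ 1 := fun i j => by
    rw [abs_mul]
    exact mul_le_one₀ (hc i 1) (abs_nonneg _) (hc j 1)
  refine (abs_expect_perm_prod_le (F := fun i j => c i (y j)) (fun i j => hc i _) e).trans ?_
  refine le_trans (Finset.expect_le_expect fun σ _ => ?_) (expect_perm_exp_neg_le
    (w := fun l => (1 - c (e (l, false)) 1 * c (e (l, true)) 1) / 4)
    (A := fun i => if |y i| = 1 then 1 else 0) (B := fun i => if y i = 0 then 1 else 0)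
    (fun l => by linarith [abs_le.mp (hcc (e (l, false)) (e (l, true)))])
    (fun l => by linarith [abs_le.mp (hcc (e (l, false)) (e (l, true)))])
    (fun i => by split_ifs <;> simp) (fun i => by split_ifs <;> simp)
    (fun i => by by_cases h : y i = 0 <;> simp [h]) e hd (by simpa using hμ) hμ0)
  rw [← Finset.sum_neg_distrib, Real.exp_sum]
  exact Finset.prod_le_prod (fun _ _ => abs_nonneg _) fun l _ =>
    abs_pairMean_le_exp hc hc0 hc1 y e σ l

lemma abs_expect_perm_prod_le_div [DecidableEq ι] {c : ι → ℤ → ℝ}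
    (hc : ∀ i n, |c i n| ≤ 1) (hc0 : ∀ i, c i 0 = 1) (hc1 : ∀ i, c i (-1) = c i 1) {y : ι → ℤ}
    (hd : 8 ≤ Fintype.card ι) {N lam : ℝ} (hN : 0 < N) (hlam : meanDefect (c · 1) = lam)
    (hlam0 : 0 < lam) (hlam1 : lam < 1)
    (hone : N / 4 ≤ (Finset.univ.filter fun i => |y i| = 1).card)
    (hzero : (Fintype.card ι : ℝ) / 2 ≤ (Finset.univ.filter fun i => y i = 0).card) :
    |𝔼 σ : Equiv.Perm ι, ∏ i, c i (y (σ i))| ≤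
      144 / (N * (lam * (1 - lam))) + 32 / Fintype.card ι := by
  set d := Fintype.card ι with hdcard
  have hd' : (8 : ℝ) ≤ d := by exact_mod_cast hd
  obtain ⟨e₀⟩ : Nonempty (Fin (d / 2) × Bool ↪ ι) :=
    Function.Embedding.nonempty_of_card_le (by simp; omega)
  obtain ⟨τ, hτ⟩ := exists_perm_le_sum_pair (c · 1) e₀
  set W := ∑ l, (1 - c (τ (e₀ (l, false))) 1 * c (τ (e₀ (l, true))) 1) / 4
  have hhalf : (d : ℝ) / 3 ≤ (d / 2 : ℕ) := by
    rw [div_le_iff₀ three_pos]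
    exact_mod_cast (by omega : d ≤ d / 2 * 3)
  have hll : 0 < lam * (1 - lam) := mul_pos hlam0 (by linarith)
  have hW : (d : ℝ) / 3 * (lam * (1 - lam)) ≤ W := by
    refine (mul_le_mul_of_nonneg_right hhalf hll.le).trans ?_
    simpa only [Fintype.card_fin, hlam] using hτ
  have hp : N / (8 * d) ≤ (Finset.univ.filter fun i => |y i| = 1).card *
      (Finset.univ.filter fun i => y i = 0).card / (d * (d - 1) : ℝ) := by
    rw [le_div_iff₀ (by nlinarith)]
    calc N / (8 * d) * (d * (d - 1)) = N / 8 * (d - 1) := by field_simp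
      _ ≤ N / 4 * (d / 2) := by nlinarith
      _ ≤ _ := by gcongr
  have hμ := mul_le_mul hp hW (by positivity) (le_trans (by positivity) hp)
  have hμ' : 6 / (N / (8 * d) * (d / 3 * (lam * (1 - lam)))) = 144 / (N * (lam * (1 - lam))) := by
    field_simp
    norm_num
  refine (abs_expect_perm_prod_le_of_pairing hc hc0 hc1 y (e₀.trans τ.toEmbedding) hd
    (lt_of_lt_of_le (by positivity) hμ) rfl).trans ?_
  rw [← hμ']
  gcongr

end Orbit

/-! ### Lattice points in `ℓ^q` balls -/

section LatticePoints

variable {ι : Type*} [Fintype ι] {q : ℝ}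

/-- The `q`-th power of the `ℓ^q` norm of a lattice vector. -/
noncomputable def normPow (q : ℝ) (y : ι → ℤ) : ℝ := ∑ i, |(y i : ℝ)| ^ q

/-- The part of `normPow q y` carried by the coordinates outside `{-1, 0, 1}`. -/
noncomputable def heavyPart (q : ℝ) (y : ι → ℤ) : ℝ := ∑ i with 2 ≤ |y i|, |(y i : ℝ)| ^ q

lemma one_le_abs_intCast_rpow (hq : 0 ≤ q) {n : ℤ} (hn : n ≠ 0) : 1 ≤ |(n : ℝ)| ^ q :=
  Real.one_le_rpow (by exact_mod_cast Int.one_le_abs hn) hq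

lemma abs_intCast_le_rpow (hq : 1 ≤ q) (n : ℤ) : |(n : ℝ)| ≤ |(n : ℝ)| ^ q := by
  rcases eq_or_ne n 0 with rfl | hn
  · simpa using Real.rpow_nonneg le_rfl q
  · exact Real.self_le_rpow_of_one_le (by exact_mod_cast Int.one_le_abs hn) hq

lemma abs_rpow_le_normPow (q : ℝ) (y : ι → ℤ) (i : ι) : |(y i : ℝ)| ^ q ≤ normPow q y :=
  Finset.single_le_sum (f := fun i => |(y i : ℝ)| ^ q) (fun _ _ => by positivity)
    (Finset.mem_univ i)

lemma normPow_comp_perm (q : ℝ) (y : ι → ℤ) (σ : Equiv.Perm ι) :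
    normPow q (y ∘ σ) = normPow q y :=
  Equiv.sum_comp σ fun i => |(y i : ℝ)| ^ q

lemma card_ne_zero_le_normPow (hq : 0 ≤ q) (y : ι → ℤ) :
    ((Finset.univ.filter fun i => y i ≠ 0).card : ℝ) ≤ normPow q y := by
  rw [Finset.natCast_card_filter]
  refine Finset.sum_le_sum fun i _ => ?_
  split_ifs with h
  · exact one_le_abs_intCast_rpow hq h
  · positivity

lemma card_sub_normPow_le (hq : 0 ≤ q) (y : ι → ℤ) (E : Finset ι) :
    E.card - normPow q y ≤ (E.filter fun i => y i = 0).card := by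
  have hcard : ((E.filter fun i => y i = 0).card : ℝ) + (E.filter fun i => ¬ y i = 0).card =
      E.card := by
    exact_mod_cast Finset.card_filter_add_card_filter_not (s := E) fun i => y i = 0
  have hne : ((E.filter fun i => ¬ y i = 0).card : ℝ) ≤ normPow q y :=
    le_trans (by gcongr; exact Finset.subset_univ E) (card_ne_zero_le_normPow hq y)
  linarith

lemma normPow_eq_card_add_heavyPart (hq : 0 < q) (y : ι → ℤ) :
    normPow q y = (Finset.univ.filter fun i => |y i| = 1).card + heavyPart q y := by
  rw [Finset.natCast_card_filter, heavyPart, Finset.sum_filter, ← Finset.sum_add_distrib]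
  refine Finset.sum_congr rfl fun i _ => ?_
  rcases (by have := abs_nonneg (y i); lia : |y i| = 0 ∨ |y i| = 1 ∨ 2 ≤ |y i|) with h | h | h
  · simp [abs_eq_zero.mp h, Real.zero_rpow hq.ne']
  · have hcast : |(y i : ℝ)| = 1 := by exact_mod_cast h
    simp [h, hcast]
  · simp [h, (by lia : ¬ |y i| = 1)]

lemma card_abs_eq_one_le_normPow (hq : 0 < q) (y : ι → ℤ) :
    ((Finset.univ.filter fun i => |y i| = 1).card : ℝ) ≤ normPow q y := by
  rw [normPow_eq_card_add_heavyPart hq]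
  exact le_add_of_nonneg_right (Finset.sum_nonneg fun _ _ => by positivity)

variable [DecidableEq ι]

lemma normPow_update_add (q : ℝ) (y : ι → ℤ) (i : ι) (j : ℤ) :
    normPow q (Function.update y i j) + |(y i : ℝ)| ^ q = normPow q y + |(j : ℝ)| ^ q := by
  have hrest : ∑ k ∈ Finset.univ.erase i, |((Function.update y i j k : ℤ) : ℝ)| ^ q =
      ∑ k ∈ Finset.univ.erase i, |(y k : ℝ)| ^ q :=
    Finset.sum_congr rfl fun k hk => by rw [Function.update_of_ne (Finset.ne_of_mem_erase hk)]
  rw [normPow, normPow, ← Finset.add_sum_erase _ _ (Finset.mem_univ i), hrest,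
    ← Finset.add_sum_erase _ (fun k => |(y k : ℝ)| ^ q) (Finset.mem_univ i),
    Function.update_self]
  ring

open Classical in
/-- The lattice points supported on `E` in the `ℓ^q` ball of radius `s ^ (1 / q)`. Measuring the
size of the ball by `s` makes the removal of a coordinate `j` a shift of `s` by `|j| ^ q`. The box
only serves to make the set finite: it contains the ball if `1 ≤ q`. -/
noncomputable def powBall (q : ℝ) (E : Finset ι) (s : ℝ) : Finset (ι → ℤ) :=
  (Finset.Icc (fun _ => -(⌈s⌉₊ : ℤ)) (fun _ => (⌈s⌉₊ : ℤ))).filter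
    fun y => normPow q y ≤ s ∧ ∀ i ∉ E, y i = 0

lemma mem_powBall (hq : 1 ≤ q) {E : Finset ι} {s : ℝ} {y : ι → ℤ} :
    y ∈ powBall q E s ↔ normPow q y ≤ s ∧ ∀ i ∉ E, y i = 0 := by
  simp only [powBall, Finset.mem_filter, Finset.mem_Icc, and_iff_right_iff_imp]
  rintro ⟨hy, -⟩
  have hbox : ∀ i, |y i| ≤ (⌈s⌉₊ : ℤ) := fun i => by
    exact_mod_cast (abs_intCast_le_rpow hq (y i)).trans
      ((abs_rpow_le_normPow q y i).trans (hy.trans (Nat.le_ceil s)))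
  exact ⟨fun i => (abs_le.mp (hbox i)).1, fun i => (abs_le.mp (hbox i)).2⟩

lemma powBall_mono (hq : 1 ≤ q) (E : Finset ι) {s t : ℝ} (h : s ≤ t) :
    powBall q E s ⊆ powBall q E t := fun y hy => by
  rw [mem_powBall hq] at hy ⊢
  exact ⟨hy.1.trans h, hy.2⟩

lemma zero_mem_powBall (hq : 1 ≤ q) (E : Finset ι) {s : ℝ} (hs : 0 ≤ s) :
    (0 : ι → ℤ) ∈ powBall q E s := by
  simp [mem_powBall hq, normPow, Real.zero_rpow (by linarith : q ≠ 0), hs]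

lemma expect_powBall_comp_perm (hq : 1 ≤ q) (s : ℝ) (σ : Equiv.Perm ι) (F : (ι → ℤ) → ℝ) :
    𝔼 y ∈ powBall q Finset.univ s, F (y ∘ σ) = 𝔼 y ∈ powBall q Finset.univ s, F y :=
  Finset.expect_nbij' (· ∘ σ) (· ∘ σ.symm)
    (fun y hy => by simpa [mem_powBall hq, normPow_comp_perm] using hy)
    (fun y hy => by simpa [mem_powBall hq, normPow_comp_perm] using hy)
    (fun y _ => by ext; simp) (fun y _ => by ext; simp) fun _ _ => rfl

lemma card_powBall_fiber (hq : 1 ≤ q) {E : Finset ι} {i : ι} (hi : i ∈ E) (s : ℝ) (j : ℤ) :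
    ((powBall q E s).filter fun y => y i = j).card =
      (powBall q (E.erase i) (s - |(j : ℝ)| ^ q)).card := by
  have h0 : (0 : ℝ) ^ q = 0 := Real.zero_rpow (by linarith)
  refine Finset.card_bij' (fun y _ => Function.update y i 0) (fun y _ => Function.update y i j)
    (fun y hy => ?_) (fun y hy => ?_) (fun y hy => ?_) fun y hy => ?_
  · obtain ⟨hy, hyi⟩ := Finset.mem_filter.mp hy
    have hnorm := normPow_update_add q y i 0
    rw [mem_powBall hq] at hy ⊢
    simp only [hyi, Int.cast_zero, abs_zero, h0, add_zero] at hnorm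
    refine ⟨by linarith, fun k hk => ?_⟩
    rcases eq_or_ne k i with rfl | hki
    · simp
    · rw [Function.update_of_ne hki]
      exact hy.2 k fun hkE => hk (Finset.mem_erase.mpr ⟨hki, hkE⟩)
  · have hnorm := normPow_update_add q y i j
    rw [mem_powBall hq] at hy
    simp only [hy.2 i (by simp), Int.cast_zero, abs_zero, h0, add_zero] at hnorm
    simp only [Finset.mem_filter, mem_powBall hq, Function.update_self, and_true]
    refine ⟨by linarith, fun k hk => ?_⟩
    have hki : k ≠ i := fun h => hk (h ▸ hi)
    rw [Function.update_of_ne hki]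
    exact hy.2 k fun hkE => hk (Finset.mem_of_mem_erase hkE)
  · simp [← (Finset.mem_filter.mp hy).2]
  · have hyi := ((mem_powBall hq).mp hy).2 i (by simp)
    simp [← hyi]

lemma card_powBall_abs_fiber (hq : 1 ≤ q) {E : Finset ι} {i : ι} (hi : i ∈ E) (s : ℝ) {m : ℕ}
    (hm : m ≠ 0) :
    ((powBall q E s).filter fun y => |y i| = (m : ℤ)).card =
      2 * (powBall q (E.erase i) (s - (m : ℝ) ^ q)).card := by
  have hdisj : Disjoint ((powBall q E s).filter fun y => y i = (m : ℤ))
      ((powBall q E s).filter fun y => y i = -(m : ℤ)) :=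
    Finset.disjoint_filter.mpr fun y _ h h' => by lia
  have hpos := card_powBall_fiber hq hi s m
  have hneg := card_powBall_fiber hq hi s (-m)
  simp only [Int.cast_neg, Int.cast_natCast, abs_neg, Nat.abs_cast] at hpos hneg
  rw [two_mul]
  nth_rw 1 [← hpos]
  rw [← hneg, ← Finset.card_union_of_disjoint hdisj, ← Finset.filter_or]
  simp only [abs_eq (Nat.cast_nonneg (α := ℤ) m)]

lemma card_mul_card_powBall_sub_one_le (hq : 1 ≤ q) (E : Finset ι) (s : ℝ) :
    2 * (E.card - s) * (powBall q E (s - 1)).card ≤ s * (powBall q E s).card := by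
  have hfiber : ∀ i ∈ E, ((powBall q E s).filter fun y => |y i| = 1).card =
      2 * ((powBall q E (s - 1)).filter fun y => y i = 0).card := fun i hi => by
    have h0 : |((0 : ℤ) : ℝ)| ^ q = 0 := by simp [Real.zero_rpow (by linarith : q ≠ 0)]
    rw [card_powBall_fiber hq hi, h0, sub_zero]
    simpa using card_powBall_abs_fiber hq hi s one_ne_zero
  calc 2 * (E.card - s) * (powBall q E (s - 1)).card
      = 2 * ∑ _y ∈ powBall q E (s - 1), (E.card - s) := by
        rw [Finset.sum_const, nsmul_eq_mul]
        ring
    _ ≤ 2 * ∑ y ∈ powBall q E (s - 1), ((E.filter fun i => y i = 0).card : ℝ) := by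
        gcongr with y hy
        linarith [card_sub_normPow_le (zero_le_one.trans hq) y E, ((mem_powBall hq).mp hy).1]
    _ = 2 * ∑ i ∈ E, (((powBall q E (s - 1)).filter fun y => y i = 0).card : ℝ) := by
        congr 1
        exact_mod_cast Finset.sum_card_bipartiteAbove_eq_sum_card_bipartiteBelow
          (s := powBall q E (s - 1)) (t := E) fun y i => y i = 0
    _ = ∑ i ∈ E, (((powBall q E s).filter fun y => |y i| = 1).card : ℝ) := by
        rw [Finset.mul_sum]
        exact Finset.sum_congr rfl fun i hi => by exact_mod_cast (hfiber i hi).symm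
    _ = ∑ y ∈ powBall q E s, ((E.filter fun i => |y i| = 1).card : ℝ) := by
        exact_mod_cast (Finset.sum_card_bipartiteAbove_eq_sum_card_bipartiteBelow
          (s := powBall q E s) (t := E) fun y i => |y i| = 1).symm
    _ ≤ ∑ _y ∈ powBall q E s, s := by
        refine Finset.sum_le_sum fun y hy => le_trans ?_ ((mem_powBall hq).mp hy).1
        refine le_trans ?_ (card_abs_eq_one_le_normPow (by linarith) y)
        gcongr
        exact Finset.subset_univ E
    _ = s * (powBall q E s).card := by
        rw [Finset.sum_const, nsmul_eq_mul, mul_comm]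

lemma card_powBall_sub_one_le (hq : 1 ≤ q) {E : Finset ι} {s κ : ℝ} (hs : s < E.card)
    (hκ : s ≤ 2 * κ * (E.card - s)) :
    (powBall q E (s - 1)).card ≤ κ * (powBall q E s).card := by
  refine le_of_mul_le_mul_left ?_ (by linarith : 0 < 2 * (E.card - s))
  calc 2 * (E.card - s) * (powBall q E (s - 1)).card
      ≤ s * (powBall q E s).card := card_mul_card_powBall_sub_one_le hq E s
    _ ≤ 2 * κ * (E.card - s) * (powBall q E s).card := by gcongr
    _ = 2 * (E.card - s) * (κ * (powBall q E s).card) := by ring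

lemma card_powBall_sub_natCast_le (hq : 1 ≤ q) {E : Finset ι} {s κ : ℝ} (hs : s < E.card)
    (hκ0 : 0 ≤ κ) (hκ : s ≤ 2 * κ * (E.card - s)) (m : ℕ) :
    (powBall q E (s - m)).card ≤ κ ^ m * (powBall q E s).card := by
  induction m with
  | zero => simp
  | succ m ih =>
    have hm : (0 : ℝ) ≤ m := m.cast_nonneg
    have hstep := card_powBall_sub_one_le hq (E := E) (s := s - m) (κ := κ) (by linarith)
      (by nlinarith [mul_nonneg hκ0 hm])
    calc ((powBall q E (s - (m + 1 : ℕ))).card : ℝ)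
        = (powBall q E (s - m - 1)).card := by
          push_cast
          rw [sub_sub]
      _ ≤ κ * (κ ^ m * (powBall q E s).card) := hstep.trans (by gcongr)
      _ = κ ^ (m + 1) * (powBall q E s).card := by ring

lemma le_floor_natCast_rpow (hq : 1 ≤ q) (m : ℕ) : m ≤ ⌊(m : ℝ) ^ q⌋₊ :=
  Nat.le_floor (by simpa using abs_intCast_le_rpow hq m)

variable {N : ℝ}

lemma card_powBall_abs_eq_le (hq : 1 ≤ q) (hN0 : 0 ≤ N) (hN : 16 * N ≤ Fintype.card ι) (i : ι)
    {m : ℕ} (hm : m ≠ 0) :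
    ((powBall q Finset.univ N).filter fun y => |y i| = (m : ℤ)).card ≤
      (N / Fintype.card ι) ^ (⌊(m : ℝ) ^ q⌋₊ - 1) *
        ((powBall q Finset.univ N).filter fun y => |y i| = 1).card := by
  set d : ℝ := (Fintype.card ι : ℝ)
  have hd0 : 0 < d := by
    have := Fintype.card_pos_iff.mpr ⟨i⟩
    positivity
  have hE : (((Finset.univ : Finset ι).erase i).card : ℝ) = d - 1 := by
    rw [Finset.cast_card_erase_of_mem (Finset.mem_univ i), Finset.card_univ]
  have hM := le_floor_natCast_rpow hq m
  have hMle : (⌊(m : ℝ) ^ q⌋₊ : ℝ) ≤ (m : ℝ) ^ q := Nat.floor_le (by positivity)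
  have hκ : N - 1 ≤ 2 * (N / d) * (d - 1 - (N - 1)) := by
    have : N * (N / d) ≤ N * (1 / 16) := mul_le_mul_of_nonneg_left
      (div_le_of_le_mul₀ hd0.le (by norm_num) (by linarith)) hN0
    have : N / d * d = N := div_mul_cancel₀ N hd0.ne'
    nlinarith
  have hone := card_powBall_abs_fiber hq (Finset.mem_univ i) N one_ne_zero
  rw [Nat.cast_one, Nat.cast_one, Real.one_rpow] at hone
  rw [card_powBall_abs_fiber hq (Finset.mem_univ i) N hm, hone]
  push_cast
  calc (2 : ℝ) * (powBall q (Finset.univ.erase i) (N - (m : ℝ) ^ q)).card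
      ≤ 2 * (powBall q (Finset.univ.erase i) (N - 1 - (⌊(m : ℝ) ^ q⌋₊ - 1 : ℕ))).card := by
        gcongr
        refine powBall_mono hq _ ?_
        push_cast [(by lia : 1 ≤ ⌊(m : ℝ) ^ q⌋₊)]
        linarith
    _ ≤ 2 * ((N / d) ^ (⌊(m : ℝ) ^ q⌋₊ - 1) * (powBall q (Finset.univ.erase i) (N - 1)).card) := by
        gcongr
        exact card_powBall_sub_natCast_le hq (by linarith) (by positivity) (by rwa [hE]) _
    _ = _ := by ring

lemma sum_range_pow_le {r : ℝ} (h0 : 0 ≤ r) (h1 : r < 1) (R : ℕ) :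
    ∑ m ∈ Finset.range R, r ^ m ≤ (1 - r)⁻¹ := by
  rw [← tsum_geometric_of_lt_one h0 h1]
  exact (summable_geometric_of_lt_one h0 h1).sum_le_tsum _ fun _ _ => by positivity

lemma sum_powBall_natAbs_le (hq : 1 ≤ q) (hN0 : 0 ≤ N) (hN : 16 * N ≤ Fintype.card ι) (i : ι)
    {W : ℕ → ℝ} (hW0 : W 0 = 0) (hW : ∀ m, 0 ≤ W m) {B : ℝ}
    (hWB : ∀ m : ℕ, W (m + 1) * (N / Fintype.card ι) ^ (⌊((m + 1 : ℕ) : ℝ) ^ q⌋₊ - 1) ≤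
      B * (1 / 4) ^ m) :
    ∑ y ∈ powBall q Finset.univ N, W (y i).natAbs ≤
      4 / 3 * B * ((powBall q Finset.univ N).filter fun y => |y i| = 1).card := by
  set S := powBall q (Finset.univ : Finset ι) N
  set R := S.sup fun y => (y i).natAbs
  have hfiber : ∀ m : ℕ, ∑ y ∈ S with (y i).natAbs = m, W (y i).natAbs =
      W m * (S.filter fun y => |y i| = (m : ℤ)).card := fun m => by
    rw [Finset.sum_congr rfl fun y hy => by rw [(Finset.mem_filter.mp hy).2], Finset.sum_const,
      nsmul_eq_mul, mul_comm]
    simp only [Int.abs_eq_natAbs, Nat.cast_inj]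
  have hB : 0 ≤ B := by simpa using (mul_nonneg (hW 1) (by positivity)).trans (hWB 0)
  calc ∑ y ∈ S, W (y i).natAbs
      = ∑ m ∈ Finset.range (R + 1), W m * (S.filter fun y => |y i| = (m : ℤ)).card := by
        rw [← Finset.sum_fiberwise_of_maps_to (t := Finset.range (R + 1))
          (g := fun y => (y i).natAbs)]
        · exact Finset.sum_congr rfl fun m _ => hfiber m
        · exact fun y hy => Finset.mem_range_succ_iff.mpr
            (Finset.le_sup (f := fun y => (y i).natAbs) hy)
    _ = ∑ m ∈ Finset.range R, W (m + 1) * (S.filter fun y => |y i| = ((m + 1 : ℕ) : ℤ)).card := by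
        rw [Finset.sum_range_succ', hW0, zero_mul, add_zero]
    _ ≤ ∑ m ∈ Finset.range R, B * (1 / 4) ^ m * (S.filter fun y => |y i| = 1).card := by
        refine Finset.sum_le_sum fun m _ => ?_
        refine (mul_le_mul_of_nonneg_left (card_powBall_abs_eq_le hq hN0 hN i m.succ_ne_zero)
          (hW _)).trans ?_
        rw [← mul_assoc]
        exact mul_le_mul_of_nonneg_right (hWB m) (Nat.cast_nonneg _)
    _ ≤ 4 / 3 * B * (S.filter fun y => |y i| = 1).card := by
        rw [← Finset.sum_mul, ← Finset.mul_sum, mul_comm (4 / 3)]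
        gcongr
        exact (sum_range_pow_le (by norm_num) (by norm_num) R).trans_eq (by norm_num)

lemma natCast_add_one_le_two_pow (m : ℕ) : (m + 1 : ℝ) ≤ 2 ^ m := by
  exact_mod_cast Nat.lt_two_pow_self (n := m)

lemma sum_powBall_sq_le (hq : 1 ≤ q) (hN0 : 0 ≤ N) (hN : 16 * N ≤ Fintype.card ι) (i : ι) :
    ∑ y ∈ powBall q Finset.univ N, (y i : ℝ) ^ 2 ≤
      2 * ((powBall q Finset.univ N).filter fun y => |y i| = 1).card := by
  have hκ : N / Fintype.card ι ≤ 1 / 16 :=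
    div_le_of_le_mul₀ (by positivity) (by norm_num) (by linarith)
  have h := sum_powBall_natAbs_le hq hN0 hN i (W := fun m => (m : ℝ) ^ 2) (B := 1) (by simp)
    (fun m => by positivity) fun m => ?_
  · simp only [Nat.cast_natAbs, Int.cast_abs, sq_abs] at h
    refine h.trans (mul_le_mul_of_nonneg_right (by norm_num) (by positivity))
  · have hM := le_floor_natCast_rpow hq (m + 1)
    have hκ0 : 0 ≤ N / Fintype.card ι := by positivity
    calc ((m + 1 : ℕ) : ℝ) ^ 2 * (N / Fintype.card ι) ^ (⌊((m + 1 : ℕ) : ℝ) ^ q⌋₊ - 1)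
        ≤ (2 ^ m) ^ 2 * (N / Fintype.card ι) ^ m := by
          gcongr ?_ ^ 2 * ?_
          · exact_mod_cast natCast_add_one_le_two_pow m
          · exact pow_le_pow_of_le_one hκ0 (by linarith) (by lia)
      _ ≤ (2 ^ m) ^ 2 * (1 / 16) ^ m := by gcongr
      _ = 1 * (1 / 4) ^ m := by
          rw [← pow_mul, mul_comm m 2, pow_mul, ← mul_pow]
          norm_num

lemma rpow_mul_pow_floor_sub_one_le (hq : 1 ≤ q) {κ : ℝ} (hκ0 : 0 ≤ κ) (hκ : κ ≤ 1 / 16) {m : ℕ}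
    (hm : 1 ≤ m) :
    ((m + 1 : ℕ) : ℝ) ^ q * κ ^ (⌊((m + 1 : ℕ) : ℝ) ^ q⌋₊ - 1) ≤ 12 * κ * (1 / 4) ^ m := by
  have hM := le_floor_natCast_rpow hq (m + 1)
  have hlt := Nat.lt_floor_add_one (((m + 1 : ℕ) : ℝ) ^ q)
  obtain ⟨k, hk⟩ : ∃ k, ⌊((m + 1 : ℕ) : ℝ) ^ q⌋₊ = k + 2 := ⟨_, (Nat.sub_add_cancel (by lia)).symm⟩
  obtain ⟨n, rfl⟩ := Nat.exists_eq_add_of_le' hm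
  have hpow : ((n + 1 + 1 : ℕ) : ℝ) ^ q ≤ 3 * 2 ^ k := by
    rw [hk, Nat.cast_add k, Nat.cast_two] at hlt
    linarith [natCast_add_one_le_two_pow k, (k.cast_nonneg : (0 : ℝ) ≤ k)]
  calc ((n + 1 + 1 : ℕ) : ℝ) ^ q * κ ^ (⌊((n + 1 + 1 : ℕ) : ℝ) ^ q⌋₊ - 1)
      ≤ 3 * 2 ^ k * κ ^ (k + 1) := by
        rw [hk, (by lia : k + 2 - 1 = k + 1)]
        gcongr
    _ = 3 * κ * (2 * κ) ^ k := by ring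
    _ ≤ 3 * κ * (1 / 4) ^ k := by
        gcongr
        linarith
    _ ≤ 3 * κ * (1 / 4) ^ n :=
        mul_le_mul_of_nonneg_left
          (pow_le_pow_of_le_one (by norm_num) (by norm_num) (by lia)) (by positivity)
    _ = 12 * κ * (1 / 4) ^ (n + 1) := by ring

lemma sum_powBall_heavy_le (hq : 1 ≤ q) (hN0 : 0 ≤ N) (hN : 16 * N ≤ Fintype.card ι) (i : ι) :
    ∑ y ∈ powBall q Finset.univ N, (if 2 ≤ |y i| then |(y i : ℝ)| ^ q else 0) ≤
      16 * (N / Fintype.card ι) * ((powBall q Finset.univ N).filter fun y => |y i| = 1).card := by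
  have h := sum_powBall_natAbs_le hq hN0 hN i (W := fun m => if 2 ≤ m then (m : ℝ) ^ q else 0)
    (B := 12 * (N / Fintype.card ι)) (by simp) (fun m => by positivity) fun m => ?_
  · simp only [← Nat.ofNat_le_cast (α := ℤ), Nat.cast_natAbs, Int.cast_abs,
      Int.cast_id] at h
    refine h.trans (le_of_eq ?_)
    ring
  · rcases m with _ | m
    · rw [if_neg (by lia), zero_mul]
      positivity
    · rw [if_pos (by lia)]
      exact rpow_mul_pow_floor_sub_one_le hq (by positivity)
        (div_le_of_le_mul₀ (by positivity) (by norm_num) (by linarith)) (by lia)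

lemma sum_card_powBall_abs_eq_one_le (hq : 1 ≤ q) (N : ℝ) :
    ∑ i : ι, (((powBall q Finset.univ N).filter fun y => |y i| = 1).card : ℝ) ≤
      N * (powBall q (Finset.univ : Finset ι) N).card := by
  calc ∑ i : ι, (((powBall q Finset.univ N).filter fun y => |y i| = 1).card : ℝ)
      = ∑ y ∈ powBall q (Finset.univ : Finset ι) N,
          ((Finset.univ.filter fun i => |y i| = 1).card : ℝ) := by
        exact_mod_cast (Finset.sum_card_bipartiteAbove_eq_sum_card_bipartiteBelow
          (s := powBall q Finset.univ N) (t := Finset.univ) fun (y : ι → ℤ) i => |y i| = 1).symm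
    _ ≤ (powBall q (Finset.univ : Finset ι) N).card • N :=
        Finset.sum_le_card_nsmul _ _ _ fun y hy =>
          (card_abs_eq_one_le_normPow (by linarith) y).trans ((mem_powBall hq).mp hy).1
    _ = N * (powBall q (Finset.univ : Finset ι) N).card := by rw [nsmul_eq_mul, mul_comm]

end LatticePoints

/-! ### The multiplier of the ball average -/

lemma abs_prod_le_one {κ : Type*} (s : Finset κ) {x : κ → ℝ} (hx : ∀ k, |x k| ≤ 1) :
    |∏ k ∈ s, x k| ≤ 1 := by
  rw [Finset.abs_prod]
  exact Finset.prod_le_one (fun _ _ => abs_nonneg _) fun k _ => hx k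

lemma one_sub_prod_le_sum {κ : Type*} (s : Finset κ) {x : κ → ℝ} (hx : ∀ k, |x k| ≤ 1) :
    1 - ∏ k ∈ s, x k ≤ ∑ k ∈ s, (1 - x k) := by
  classical
  induction s using Finset.induction_on with
  | empty => simp
  | insert k s hk ih =>
    rw [Finset.prod_insert hk, Finset.sum_insert hk]
    nlinarith [mul_nonneg (sub_nonneg.2 (abs_le.1 (hx k)).2)
      (sub_nonneg.2 (abs_le.1 (abs_prod_le_one s hx)).2)]

section BallMean

variable {ι : Type*} [Fintype ι] {q N : ℝ} {c : ι → ℤ → ℝ}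

lemma meanDefect_nonneg {a : ι → ℝ} (ha : ∀ i, |a i| ≤ 1) : 0 ≤ meanDefect a :=
  Finset.expect_nonneg fun i _ => by linarith [(abs_le.1 (ha i)).2]

lemma meanDefect_le_one [Nonempty ι] {a : ι → ℝ} (ha : ∀ i, |a i| ≤ 1) : meanDefect a ≤ 1 :=
  Finset.expect_le Finset.univ_nonempty fun i _ => by linarith [(abs_le.1 (ha i)).1]

variable [DecidableEq ι]

/-- The mean of the product function `∏ i, c i (y i)` over the lattice points of the ball. For the
cosines `c i n = cos (2πnξᵢ)` this is the Fourier multiplier of the ball average. -/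
noncomputable def ballMean (q N : ℝ) (c : ι → ℤ → ℝ) : ℝ :=
  𝔼 y ∈ powBall q Finset.univ N, ∏ i, c i (y i)

lemma abs_ballMean_le_one (hq : 1 ≤ q) (hN0 : 0 ≤ N) (hc : ∀ i n, |c i n| ≤ 1) :
    |ballMean q N c| ≤ 1 :=
  (Finset.abs_expect_le _ _).trans <| Finset.expect_le ⟨0, zero_mem_powBall hq _ hN0⟩
    fun _ _ => abs_prod_le_one _ fun i => hc i _

lemma ballMean_eq_expect_perm (hq : 1 ≤ q) (N : ℝ) (c : ι → ℤ → ℝ) :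
    ballMean q N c =
      𝔼 y ∈ powBall q Finset.univ N, 𝔼 σ : Equiv.Perm ι, ∏ i, c i (y (σ i)) := by
  rw [Finset.expect_comm, ← Fintype.expect_const (ι := Equiv.Perm ι) (ballMean q N c)]
  exact Finset.expect_congr rfl fun σ _ =>
    (expect_powBall_comp_perm hq N σ fun y => ∏ i, c i (y i)).symm

lemma card_mul_expect_powBall_apply (hq : 1 ≤ q) (N : ℝ) (i : ι) (f : ℤ → ℝ) :
    Fintype.card ι * 𝔼 y ∈ powBall q Finset.univ N, f (y i) =
      ∑ j, 𝔼 y ∈ powBall q (Finset.univ : Finset ι) N, f (y j) := by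
  have hsymm : ∀ j : ι, 𝔼 y ∈ powBall q Finset.univ N, f (y j) =
      𝔼 y ∈ powBall q Finset.univ N, f (y i) := fun j => by
    simpa using expect_powBall_comp_perm hq N (Equiv.swap i j) fun y => f (y i)
  simp [hsymm]

lemma expect_powBall_sq_le (hq : 1 ≤ q) (hN0 : 0 ≤ N) (hN : 16 * N ≤ Fintype.card ι) (i : ι) :
    𝔼 y ∈ powBall q Finset.univ N, (y i : ℝ) ^ 2 ≤ 2 * (N / Fintype.card ι) := by
  have : Nonempty ι := ⟨i⟩
  have hball : (0 : ℝ) < (powBall q (Finset.univ : Finset ι) N).card := by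
    exact_mod_cast Finset.card_pos.2 ⟨0, zero_mem_powBall hq _ hN0⟩
  rw [← mul_div_assoc, le_div_iff₀' (by exact_mod_cast Fintype.card_pos),
    card_mul_expect_powBall_apply hq N i (fun n => (n : ℝ) ^ 2)]
  simp only [Finset.expect_eq_sum_div_card, ← Finset.sum_div]
  rw [div_le_iff₀ hball]
  calc ∑ j, ∑ y ∈ powBall q Finset.univ N, (y j : ℝ) ^ 2
      ≤ ∑ j, 2 * (((powBall q Finset.univ N).filter fun y => |y j| = 1).card : ℝ) :=
        Finset.sum_le_sum fun j _ => sum_powBall_sq_le hq hN0 hN j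
    _ ≤ 2 * N * (powBall q (Finset.univ : Finset ι) N).card := by
        rw [← Finset.mul_sum, mul_assoc]
        gcongr
        exact sum_card_powBall_abs_eq_one_le hq N

lemma one_sub_ballMean_le (hq : 1 ≤ q) (hN0 : 0 ≤ N) (hN : 16 * N ≤ Fintype.card ι)
    (hc : ∀ i n, |c i n| ≤ 1) (hcsq : ∀ i n, 1 - c i n ≤ (n : ℝ) ^ 2 * (1 - c i 1)) :
    1 - ballMean q N c ≤ 4 * N * meanDefect (c · 1) := by
  calc 1 - ballMean q N c
      = 𝔼 y ∈ powBall q Finset.univ N, (1 - ∏ i, c i (y i)) := by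
        rw [Finset.expect_sub_distrib, Finset.expect_const ⟨0, zero_mem_powBall hq _ hN0⟩,
          ballMean]
    _ ≤ 𝔼 y ∈ powBall q Finset.univ N, ∑ i, (y i : ℝ) ^ 2 * (1 - c i 1) :=
        Finset.expect_le_expect fun y _ => (one_sub_prod_le_sum _ fun i => hc i _).trans
          (Finset.sum_le_sum fun i _ => hcsq i _)
    _ = ∑ i, (𝔼 y ∈ powBall q Finset.univ N, (y i : ℝ) ^ 2) * (1 - c i 1) := by
        rw [Finset.expect_sum_comm]
        simp only [Finset.expect_mul]
    _ ≤ ∑ i, 2 * (N / Fintype.card ι) * (1 - c i 1) := by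
        gcongr with i
        · linarith [(abs_le.1 (hc i 1)).2]
        · exact expect_powBall_sq_le hq hN0 hN i
    _ = 4 * N * meanDefect (c · 1) := by
        rw [← Finset.mul_sum, meanDefect, Fintype.expect_eq_sum_div_card, ← Finset.sum_div]
        ring

lemma expect_powBall_heavyPart_le (hq : 1 ≤ q) (hN0 : 0 ≤ N) (hN : 16 * N ≤ Fintype.card ι) :
    𝔼 y ∈ powBall q (Finset.univ : Finset ι) N, heavyPart q y ≤
      16 * (N / Fintype.card ι) * N := by
  have hball : (0 : ℝ) < (powBall q (Finset.univ : Finset ι) N).card := by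
    exact_mod_cast Finset.card_pos.2 ⟨0, zero_mem_powBall hq _ hN0⟩
  rw [Finset.expect_eq_sum_div_card, div_le_iff₀ hball]
  calc ∑ y ∈ powBall q (Finset.univ : Finset ι) N, heavyPart q y
      = ∑ i : ι, ∑ y ∈ powBall q Finset.univ N, (if 2 ≤ |y i| then |(y i : ℝ)| ^ q else 0) := by
        simp only [heavyPart, Finset.sum_filter]
        exact Finset.sum_comm
    _ ≤ ∑ i : ι, 16 * (N / Fintype.card ι) *
          ((powBall q Finset.univ N).filter fun y => |y i| = 1).card :=
        Finset.sum_le_sum fun i _ => sum_powBall_heavy_le hq hN0 hN i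
    _ ≤ 16 * (N / Fintype.card ι) * N * (powBall q (Finset.univ : Finset ι) N).card := by
        rw [← Finset.mul_sum, mul_assoc _ N]
        gcongr
        exact sum_card_powBall_abs_eq_one_le hq N

open Classical in
lemma expect_powBall_normPow_le_sub_one_le (hq : 1 ≤ q) (hN0 : 0 < N)
    (hN : 16 * N ≤ Fintype.card ι) :
    𝔼 y ∈ powBall q (Finset.univ : Finset ι) N, (if normPow q y ≤ N - 1 then (1 : ℝ) else 0) ≤
      N / Fintype.card ι := by
  have hball : (0 : ℝ) < (powBall q (Finset.univ : Finset ι) N).card := by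
    exact_mod_cast Finset.card_pos.2 ⟨0, zero_mem_powBall hq _ hN0.le⟩
  have hκ : N ≤ 2 * (N / Fintype.card ι) * ((Finset.univ : Finset ι).card - N) := by
    rw [Finset.card_univ, mul_div_assoc', div_mul_eq_mul_div, le_div_iff₀ (by linarith)]
    nlinarith
  rw [Finset.expect_eq_sum_div_card, ← Finset.natCast_card_filter, div_le_iff₀ hball]
  refine le_trans ?_ (card_powBall_sub_one_le hq (by rw [Finset.card_univ]; linarith) hκ)
  gcongr
  intro y hy
  simpa [mem_powBall hq] using (Finset.mem_filter.1 hy).2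

lemma abs_expect_perm_prod_le_of_mem_powBall (hq : 1 ≤ q) (hN4 : 4 ≤ N)
    (hN : 16 * N ≤ Fintype.card ι) (hc : ∀ i n, |c i n| ≤ 1) (hc0 : ∀ i, c i 0 = 1)
    (hc1 : ∀ i, c i (-1) = c i 1) {lam : ℝ} (hlam : meanDefect (c · 1) = lam) (hlam0 : 0 < lam)
    (hlam1 : lam < 1) {y : ι → ℤ} (hy : y ∈ powBall q Finset.univ N)
    (hsphere : N - 1 < normPow q y) (hlight : heavyPart q y < N / 2) :
    |𝔼 σ : Equiv.Perm ι, ∏ i, c i (y (σ i))| ≤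
      144 / (N * (lam * (1 - lam))) + 32 / Fintype.card ι := by
  have hyN := ((mem_powBall hq).1 hy).1
  have hcard : (8 : ℝ) ≤ Fintype.card ι := by linarith
  have hzero := card_sub_normPow_le (by linarith : 0 ≤ q) y Finset.univ
  rw [Finset.card_univ] at hzero
  refine abs_expect_perm_prod_le_div hc hc0 hc1 (by exact_mod_cast hcard) (by linarith) hlam
    hlam0 hlam1 ?_ (by linarith)
  linarith [normPow_eq_card_add_heavyPart (by linarith : 0 < q) y]

open Classical in
lemma abs_expect_perm_prod_le_add_heavyPart (hq : 1 ≤ q) (hN4 : 4 ≤ N)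
    (hN : 16 * N ≤ Fintype.card ι) (hc : ∀ i n, |c i n| ≤ 1) (hc0 : ∀ i, c i 0 = 1)
    (hc1 : ∀ i, c i (-1) = c i 1) {lam : ℝ} (hlam : meanDefect (c · 1) = lam) (hlam0 : 0 < lam)
    (hlam1 : lam < 1) {y : ι → ℤ} (hy : y ∈ powBall q Finset.univ N) :
    |𝔼 σ : Equiv.Perm ι, ∏ i, c i (y (σ i))| ≤
      144 / (N * (lam * (1 - lam))) + 32 / Fintype.card ι +
        (if normPow q y ≤ N - 1 then 1 else 0) + 2 / N * heavyPart q y := by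
  have hN0 : 0 < N := by linarith
  have hgeneric : 0 ≤ 144 / (N * (lam * (1 - lam))) + 32 / (Fintype.card ι : ℝ) := by
    have := sub_pos.2 hlam1
    positivity
  have hheavy0 : 0 ≤ 2 / N * heavyPart q y :=
    mul_nonneg (by positivity) (Finset.sum_nonneg fun _ _ => by positivity)
  have hone : |𝔼 σ : Equiv.Perm ι, ∏ i, c i (y (σ i))| ≤ 1 :=
    (Finset.abs_expect_le _ _).trans <| Finset.expect_le Finset.univ_nonempty
      fun σ _ => abs_prod_le_one _ fun i => hc i _
  split_ifs with hsphere
  · linarith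
  · rcases lt_or_ge (heavyPart q y) (N / 2) with hlight | hheavy
    · linarith [abs_expect_perm_prod_le_of_mem_powBall hq hN4 hN hc hc0 hc1 hlam hlam0 hlam1 hy
        (not_le.1 hsphere) hlight]
    · have : 1 ≤ 2 / N * heavyPart q y := by
        rw [div_mul_eq_mul_div, one_le_div hN0]
        linarith
      linarith

lemma abs_ballMean_le_div (hq : 1 ≤ q) (hN4 : 4 ≤ N) (hN : 16 * N ≤ Fintype.card ι)
    (hc : ∀ i n, |c i n| ≤ 1) (hc0 : ∀ i, c i 0 = 1) (hc1 : ∀ i, c i (-1) = c i 1) {lam : ℝ}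
    (hlam : meanDefect (c · 1) = lam) (hlam0 : 0 < lam) (hlam1 : lam < 1) :
    |ballMean q N c| ≤ 144 / (N * (lam * (1 - lam))) + 41 * (N / Fintype.card ι) := by
  classical
  set d : ℝ := (Fintype.card ι : ℝ)
  set D := 144 / (N * (lam * (1 - lam))) + 32 / d
  have hN0 : 0 < N := by linarith
  have hsmall : 32 / d ≤ 8 * (N / d) := by
    rw [mul_div_assoc']
    gcongr
    linarith
  rw [ballMean_eq_expect_perm hq]
  calc |𝔼 y ∈ powBall q Finset.univ N, 𝔼 σ : Equiv.Perm ι, ∏ i, c i (y (σ i))|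
      ≤ 𝔼 y ∈ powBall q Finset.univ N,
          (D + (if normPow q y ≤ N - 1 then 1 else 0) + 2 / N * heavyPart q y) :=
        (Finset.abs_expect_le _ _).trans <| Finset.expect_le_expect fun y hy =>
          abs_expect_perm_prod_le_add_heavyPart hq hN4 hN hc hc0 hc1 hlam hlam0 hlam1 hy
    _ ≤ D + N / d + 2 / N * (16 * (N / d) * N) := by
        rw [Finset.expect_add_distrib, Finset.expect_add_distrib,
          Finset.expect_const ⟨0, zero_mem_powBall hq _ hN0.le⟩, ← Finset.mul_expect]
        gcongr
        · exact expect_powBall_normPow_le_sub_one_le hq hN0 hN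
        · exact expect_powBall_heavyPart_le hq hN0.le hN
    _ = D + 33 * (N / d) := by
        field_simp
        ring
    _ ≤ 144 / (N * (lam * (1 - lam))) + 41 * (N / d) := by linarith

end BallMean

section CesaroReal

variable {l : ℝ} {n : ℕ}

lemma cesaro_one_sub_nonneg (hl1 : l ≤ 1) (n : ℕ) : 0 ≤ cesaro (1 - l) n :=
  smul_nonneg (by positivity) (Finset.sum_nonneg fun k _ => pow_nonneg (sub_nonneg.2 hl1) k)

lemma cesaro_one_sub_le_one (hl0 : 0 ≤ l) (hl1 : l ≤ 1) (n : ℕ) : cesaro (1 - l) n ≤ 1 := by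
  rw [cesaro, smul_eq_mul]
  refine inv_mul_le_of_le_mul₀ (by positivity) zero_le_one ?_
  simpa using Finset.sum_le_card_nsmul (Finset.range n) (fun k => (1 - l) ^ k) 1
    fun k _ => pow_le_one₀ (sub_nonneg.2 hl1) (sub_le_self 1 hl0)

lemma one_sub_cesaro_one_sub_le (hl0 : 0 ≤ l) (hl1 : l ≤ 1) (hn : n ≠ 0) :
    1 - cesaro (1 - l) n ≤ n * l := by
  have hpow : ∀ k ∈ Finset.range n, 1 - n * l ≤ (1 - l) ^ k := fun k hk => by
    have hbern := one_add_mul_le_pow (a := -l) (by linarith) k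
    have hkn : (k : ℝ) * l ≤ n * l := by gcongr; exact (Finset.mem_range.1 hk).le
    rw [← sub_eq_add_neg] at hbern
    linarith
  have hsum : 1 - n * l ≤ cesaro (1 - l) n := by
    rw [cesaro, smul_eq_mul, le_inv_mul_iff₀ (by positivity)]
    simpa using Finset.card_nsmul_le_sum _ _ _ hpow
  linarith

lemma cesaro_one_sub_mul_le_one (hl1 : l ≤ 1) (n : ℕ) : cesaro (1 - l) n * (n * l) ≤ 1 := by
  rcases eq_or_ne n 0 with rfl | hn
  · simp
  have hgeom : (∑ k ∈ Finset.range n, (1 - l) ^ k) * l = 1 - (1 - l) ^ n := by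
    linarith [geom_sum_mul (1 - l) n]
  calc cesaro (1 - l) n * (n * l) = (∑ k ∈ Finset.range n, (1 - l) ^ k) * l := by
        rw [cesaro, smul_eq_mul]
        field_simp
    _ ≤ 1 := by
        rw [hgeom]
        linarith [pow_nonneg (sub_nonneg.2 hl1) n]

end CesaroReal

section MultiplierError

variable {ι : Type*} [Fintype ι] [DecidableEq ι] {q N : ℝ} {c : ι → ℤ → ℝ}

/-- The multiplier of the ball average followed by a step of the lazy random walk, minus that of the
Cesàro mean of `⌊N⌋₊` powers of the walk. With `c i n = cos (2πnξᵢ)`, the multiplier of the walk is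
`1 - meanDefect (c · 1)`. -/
noncomputable def multiplierError (q N : ℝ) (c : ι → ℤ → ℝ) : ℝ :=
  ballMean q N c * (1 - meanDefect (c · 1)) - cesaro (1 - meanDefect (c · 1)) ⌊N⌋₊

lemma abs_multiplierError_le [Nonempty ι] (hc : ∀ i n, |c i n| ≤ 1) :
    |multiplierError q N c| ≤
      |ballMean q N c| * (1 - meanDefect (c · 1)) + cesaro (1 - meanDefect (c · 1)) ⌊N⌋₊ := by
  have hlam1 : meanDefect (c · 1) ≤ 1 := meanDefect_le_one fun i => hc i 1
  refine (abs_sub _ _).trans_eq ?_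
  rw [abs_mul, abs_of_nonneg (sub_nonneg.2 hlam1), abs_of_nonneg (cesaro_one_sub_nonneg hlam1 _)]

lemma abs_multiplierError_le_two [Nonempty ι] (hq : 1 ≤ q) (hN0 : 0 ≤ N)
    (hc : ∀ i n, |c i n| ≤ 1) : |multiplierError q N c| ≤ 2 := by
  have hlam0 : 0 ≤ meanDefect (c · 1) := meanDefect_nonneg fun i => hc i 1
  have hlam1 : meanDefect (c · 1) ≤ 1 := meanDefect_le_one fun i => hc i 1
  have hball : |ballMean q N c| * (1 - meanDefect (c · 1)) ≤ 1 :=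
    mul_le_one₀ (abs_ballMean_le_one hq hN0 hc) (sub_nonneg.2 hlam1) (sub_le_self 1 hlam0)
  linarith [abs_multiplierError_le (q := q) (N := N) hc,
    cesaro_one_sub_le_one hlam0 hlam1 ⌊N⌋₊]

lemma abs_multiplierError_le_mul (hq : 1 ≤ q) (hN1 : 1 ≤ N) (hN : 16 * N ≤ Fintype.card ι)
    (hc : ∀ i n, |c i n| ≤ 1) (hcsq : ∀ i n, 1 - c i n ≤ (n : ℝ) ^ 2 * (1 - c i 1)) :
    |multiplierError q N c| ≤ 5 * (N * meanDefect (c · 1)) := by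
  have hd : 0 < (Fintype.card ι : ℝ) := by linarith
  have : Nonempty ι := Fintype.card_pos_iff.1 (by exact_mod_cast hd)
  have hm := one_sub_ballMean_le hq (by linarith) hN hc hcsq
  have hm1 := (abs_le.1 (abs_ballMean_le_one hq (by linarith : 0 ≤ N) hc)).2
  have hlam0 : 0 ≤ meanDefect (c · 1) := meanDefect_nonneg fun i => hc i 1
  have hlam1 : meanDefect (c · 1) ≤ 1 := meanDefect_le_one fun i => hc i 1
  have hψ1 := cesaro_one_sub_le_one hlam0 hlam1 ⌊N⌋₊
  have hψ := one_sub_cesaro_one_sub_le hlam0 hlam1 (Nat.floor_pos.2 hN1).ne'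
  rw [multiplierError]
  set lam := meanDefect (c · 1)
  have hfloor : ⌊N⌋₊ * lam ≤ N * lam := by
    gcongr
    exact Nat.floor_le (by linarith)
  rw [abs_le]
  constructor <;> nlinarith

lemma abs_multiplierError_le_inv (hq : 1 ≤ q) (hN4 : 4 ≤ N) (hN : 16 * N ≤ Fintype.card ι)
    (hc : ∀ i n, |c i n| ≤ 1) (hc0 : ∀ i, c i 0 = 1) (hc1 : ∀ i, c i (-1) = c i 1)
    (hlam0 : 0 < meanDefect (c · 1)) :
    |multiplierError q N c| ≤
      146 * (N * meanDefect (c · 1))⁻¹ + 41 * (N / Fintype.card ι) := by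
  have hd : 0 < (Fintype.card ι : ℝ) := by linarith
  have : Nonempty ι := Fintype.card_pos_iff.1 (by exact_mod_cast hd)
  have hlam1 : meanDefect (c · 1) ≤ 1 := meanDefect_le_one fun i => hc i 1
  refine (abs_multiplierError_le hc).trans ?_
  have hdecay := fun h => abs_ballMean_le_div hq hN4 hN hc hc0 hc1 rfl hlam0 h
  set lam := meanDefect (c · 1)
  have : 0 < N := by linarith
  have hψ : cesaro (1 - lam) ⌊N⌋₊ ≤ 2 * (N * lam)⁻¹ := by
    have hfloor : N * lam ≤ 2 * (⌊N⌋₊ * lam) := by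
      nlinarith [Nat.lt_floor_add_one N]
    rw [← div_eq_mul_inv, le_div_iff₀ (by positivity)]
    nlinarith [cesaro_one_sub_mul_le_one hlam1 ⌊N⌋₊, cesaro_one_sub_nonneg hlam1 ⌊N⌋₊]
  have hball : |ballMean q N c| * (1 - lam) ≤
      144 * (N * lam)⁻¹ + 41 * (N / Fintype.card ι) := by
    rcases hlam1.eq_or_lt with h | h
    · rw [h, sub_self, mul_zero]
      positivity
    · have : 0 < 1 - lam := sub_pos.2 h
      calc |ballMean q N c| * (1 - lam)
          ≤ (144 / (N * (lam * (1 - lam))) + 41 * (N / Fintype.card ι)) * (1 - lam) := by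
            gcongr
            exact hdecay h
        _ = 144 * (N * lam)⁻¹ + 41 * (N / Fintype.card ι) * (1 - lam) := by field_simp
        _ ≤ 144 * (N * lam)⁻¹ + 41 * (N / Fintype.card ι) := by
            refine add_le_add_right ?_ _
            exact mul_le_of_le_one_right (by positivity) (sub_le_self 1 hlam0.le)
  linarith

lemma le_sq_mul_min_inv {x b : ℝ} (hx : 0 ≤ x) (hb : 1 ≤ b) (hxb : x ≤ b) :
    x ≤ b ^ 2 * min x x⁻¹ := by
  rcases hx.eq_or_lt with rfl | hx
  · simp
  rw [mul_min_of_nonneg _ _ (by positivity)]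
  refine le_min (le_mul_of_one_le_left hx.le (one_le_pow₀ hb)) ?_
  rw [← div_eq_mul_inv, le_div_iff₀ hx]
  nlinarith

lemma abs_multiplierError_le_min_add (hq : 1 ≤ q) (hN1 : 1 ≤ N) (hN : N ≤ Fintype.card ι)
    (hc : ∀ i n, |c i n| ≤ 1) (hc0 : ∀ i, c i 0 = 1) (hc1 : ∀ i, c i (-1) = c i 1)
    (hcsq : ∀ i n, 1 - c i n ≤ (n : ℝ) ^ 2 * (1 - c i 1)) :
    |multiplierError q N c| ≤
      146 * (min (N * meanDefect (c · 1)) (N * meanDefect (c · 1))⁻¹ + N / Fintype.card ι) := by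
  have hd : 0 < (Fintype.card ι : ℝ) := by linarith
  have : Nonempty ι := Fintype.card_pos_iff.1 (by exact_mod_cast hd)
  have hlam0 : 0 ≤ meanDefect (c · 1) := meanDefect_nonneg fun i => hc i 1
  have hlam1 : meanDefect (c · 1) ≤ 1 := meanDefect_le_one fun i => hc i 1
  have hlow := abs_multiplierError_le_mul hq hN1 (hc := hc) (hcsq := hcsq)
  have hhigh := abs_multiplierError_le_inv (N := N) hq (hc := hc) (hc0 := hc0) (hc1 := hc1)
  have hNd : 0 ≤ N / Fintype.card ι := by positivity
  set lam := meanDefect (c · 1)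
  have hmin : 0 ≤ min (N * lam) (N * lam)⁻¹ := by positivity
  rcases lt_or_ge (Fintype.card ι : ℝ) (16 * N) with hlarge | hsmall
  · have : 1 / 16 ≤ N / Fintype.card ι := by rw [le_div_iff₀ hd]; linarith
    linarith [abs_multiplierError_le_two hq (by linarith : 0 ≤ N) hc]
  rcases le_or_gt (N * lam) 4 with hx | hx
  · linarith [hlow hsmall, le_sq_mul_min_inv (by positivity) (by norm_num) hx]
  · have hlam : 0 < lam := pos_of_mul_pos_right (by linarith : 0 < N * lam) (by linarith)
    have hx1 : (N * lam)⁻¹ ≤ N * lam := (inv_le_one_of_one_le₀ (by linarith)).trans (by linarith)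
    rw [min_eq_right hx1]
    linarith [hhigh (by nlinarith) hsmall hlam]

end MultiplierError

section Lacunary

/-- The antiderivative `6 x / (1 + x)` makes the sum of `min x x⁻¹` along a lacunary sequence
telescope. -/
lemma min_inv_le_sub_of_two_mul_le {x x' : ℝ} (hx : 0 ≤ x) (h : 2 * x ≤ x') :
    min x x⁻¹ ≤ 6 * x' / (1 + x') - 6 * x / (1 + x) := by
  rcases hx.eq_or_lt with rfl | hx
  · simpa using by positivity
  have hmono : 6 * (2 * x) / (1 + 2 * x) ≤ 6 * x' / (1 + x') := by
    rw [div_le_div_iff₀ (by positivity) (by linarith)]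
    nlinarith
  have hdiff : 6 * (2 * x) / (1 + 2 * x) - 6 * x / (1 + x) = 6 * x / ((1 + 2 * x) * (1 + x)) := by
    field_simp
    ring
  suffices min x x⁻¹ ≤ 6 * x / ((1 + 2 * x) * (1 + x)) by linarith
  rw [le_div_iff₀ (by positivity)]
  rcases le_total x 1 with h1 | h1
  · calc min x x⁻¹ * ((1 + 2 * x) * (1 + x)) ≤ x * ((1 + 2 * 1) * (1 + 1)) := by
          gcongr
          exact min_le_left _ _
      _ = 6 * x := by ring
  · calc min x x⁻¹ * ((1 + 2 * x) * (1 + x)) ≤ x⁻¹ * ((x + 2 * x) * (x + x)) := by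
          gcongr
          exact min_le_right _ _
      _ = 6 * x := by
          field_simp
          ring

variable {x : ℕ → ℝ}

lemma sum_min_inv_le_six (hx : ∀ j, 0 ≤ x j) (h : ∀ j, 2 * x j ≤ x (j + 1)) (J : ℕ) :
    ∑ j ∈ Finset.range J, min (x j) (x j)⁻¹ ≤ 6 := by
  have htop : 6 * x J / (1 + x J) ≤ 6 := by
    have := hx J
    rw [div_le_iff₀ (by positivity)]
    linarith
  have hbottom : 0 ≤ 6 * x 0 / (1 + x 0) := by
    have := hx 0
    positivity
  calc ∑ j ∈ Finset.range J, min (x j) (x j)⁻¹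
      ≤ ∑ j ∈ Finset.range J, (6 * x (j + 1) / (1 + x (j + 1)) - 6 * x j / (1 + x j)) :=
        Finset.sum_le_sum fun j _ => min_inv_le_sub_of_two_mul_le (hx j) (h j)
    _ = 6 * x J / (1 + x J) - 6 * x 0 / (1 + x 0) :=
        Finset.sum_range_sub (fun j => 6 * x j / (1 + x j)) J
    _ ≤ 6 := by linarith

lemma sum_range_succ_le_two_mul (hx : ∀ j, 0 ≤ x j) (h : ∀ j, 2 * x j ≤ x (j + 1)) (J : ℕ) :
    ∑ j ∈ Finset.range (J + 1), x j ≤ 2 * x J := by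
  induction J with
  | zero => simpa using by linarith [hx 0]
  | succ J ih =>
    rw [Finset.sum_range_succ]
    linarith [h J]

end Lacunary

/-! ### Trigonometric polynomials -/

section TrigPoly

variable {ι : Type*} [Fintype ι]

/-- The trigonometric polynomial `∑ y, u y * exp (2πi y·z)` with coefficients `u`, as a function of
`u`: this is an algebra homomorphism because convolution becomes multiplication. -/
noncomputable def trigPoly (z : UnitAddTorus ι) : ℝ[ι → ℤ] →ₐ[ℝ] ℂ :=
  AddMonoidAlgebra.lift ℝ ℂ (ι → ℤ)
    { toFun := fun y => mFourier y.toAdd z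
      map_one' := by rw [toAdd_one, mFourier_zero, ContinuousMap.one_apply]
      map_mul' := fun _ _ => mFourier_add }

lemma trigPoly_single (z : UnitAddTorus ι) (y : ι → ℤ) (r : ℝ) :
    trigPoly z (single y r) = r * mFourier y z := by
  rw [trigPoly, AddMonoidAlgebra.lift_single, Complex.real_smul]
  rfl

lemma trigPoly_restrict (z : UnitAddTorus ι) (X : Finset (ι → ℤ)) (h : (ι → ℤ) → ℝ) :
    trigPoly z (restrict X h) = ∑ y ∈ X, h y * mFourier y z := by
  simp only [restrict, map_sum, trigPoly_single]

lemma trigPoly_eq_sum_support (z : UnitAddTorus ι) (u : ℝ[ι → ℤ]) :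
    trigPoly z u = ∑ y ∈ u.coeff.support, u.coeff y * mFourier y z := by
  rw [← trigPoly_restrict, restrict_support_coeff]

lemma trigPoly_reflect (z : UnitAddTorus ι) (u : ℝ[ι → ℤ]) :
    trigPoly z (reflect u) = starRingEnd ℂ (trigPoly z u) := by
  have h : (trigPoly z).comp reflect.toAlgHom = Complex.conjAe.toAlgHom.comp (trigPoly z) :=
    AddMonoidAlgebra.algHom_ext
      (fun y => by simp [reflect_single, trigPoly_single, mFourier_neg]) (Subsingleton.elim _ _)
  exact DFunLike.congr_fun h u

lemma continuous_trigPoly (u : ℝ[ι → ℤ]) : Continuous fun z : UnitAddTorus ι => trigPoly z u := by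
  simp only [trigPoly_eq_sum_support]
  fun_prop

/-- The normalised Haar measure of the torus. -/
noncomputable abbrev torusHaar (ι : Type*) [Fintype ι] : Measure (UnitAddTorus ι) :=
  Measure.pi fun _ => AddCircle.haarAddCircle

lemma integrable_torusHaar_of_continuous {E : Type*} [NormedAddCommGroup E] {f : UnitAddTorus ι → E}
    (hf : Continuous f) : Integrable f (torusHaar ι) :=
  hf.integrable_of_hasCompactSupport (HasCompactSupport.of_compactSpace f)

lemma integral_fourier_of_ne_zero {n : ℤ} (hn : n ≠ 0) :
    ∫ x : UnitAddCircle, fourier n x ∂AddCircle.haarAddCircle = 0 :=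
  integral_eq_zero_of_add_right_eq_neg (fourier_add_half_inv_index hn one_pos)

lemma integral_mFourier (y : ι → ℤ) :
    ∫ z, mFourier y z ∂torusHaar ι = if y = 0 then 1 else 0 := by
  split_ifs with hy
  · simp [hy, mFourier_zero]
  · obtain ⟨i, hi⟩ := Function.ne_iff.mp hy
    refine (integral_fintype_prod_eq_prod fun i x => fourier (y i) x).trans ?_
    exact Finset.prod_eq_zero (Finset.mem_univ i) (integral_fourier_of_ne_zero hi)

lemma integral_trigPoly (u : ℝ[ι → ℤ]) : ∫ z, trigPoly z u ∂torusHaar ι = u.coeff 0 := by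
  classical
  simp only [trigPoly_eq_sum_support]
  rw [integral_finsetSum _ fun y _ => integrable_torusHaar_of_continuous (by fun_prop)]
  simp +contextual [integral_const_mul, integral_mFourier]

lemma integral_norm_sq_trigPoly (u : ℝ[ι → ℤ]) :
    ∫ z, ‖trigPoly z u‖ ^ 2 ∂torusHaar ι = sqNorm u := by
  have h : ∫ z, ((‖trigPoly z u‖ ^ 2 : ℝ) : ℂ) ∂torusHaar ι = (sqNorm u : ℂ) := by
    simp only [← Complex.normSq_eq_norm_sq, ← Complex.mul_conj, ← trigPoly_reflect, ← map_mul,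
      integral_trigPoly, coeff_mul_reflect_self_zero]
  exact Complex.ofReal_injective (integral_ofReal.symm.trans h)

lemma sum_sqNorm_mul_le {J : Type*} {s : Finset J} {w : J → ℝ[ι → ℤ]} {C : ℝ}
    (hC : ∀ z, ∑ j ∈ s, ‖trigPoly z (w j)‖ ^ 2 ≤ C) (g : ℝ[ι → ℤ]) :
    ∑ j ∈ s, sqNorm (w j * g) ≤ C * sqNorm g := by
  have hcont : ∀ u : ℝ[ι → ℤ], Continuous fun z : UnitAddTorus ι => ‖trigPoly z u‖ ^ 2 :=
    fun u => (continuous_trigPoly u).norm.pow 2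
  simp only [← integral_norm_sq_trigPoly]
  rw [← integral_finsetSum _ fun j _ => integrable_torusHaar_of_continuous (hcont _),
    ← integral_const_mul]
  refine integral_mono (integrable_torusHaar_of_continuous ?_)
    (integrable_torusHaar_of_continuous ?_) fun z => ?_
  · exact continuous_finsetSum _ fun j _ => hcont _
  · exact continuous_const.mul (hcont g)
  · simp only [map_mul, norm_mul, mul_pow, ← Finset.sum_mul]
    exact mul_le_mul_of_nonneg_right (hC z) (sq_nonneg _)

end TrigPoly

section Cosine

/-- `cosine x n = cos (2πnx)`, the real part of the `n`-th Fourier monomial. -/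
noncomputable def cosine (x : UnitAddCircle) (n : ℤ) : ℝ := (fourier n x : ℂ).re

lemma norm_fourier_apply (n : ℤ) (x : UnitAddCircle) : ‖(fourier n x : ℂ)‖ = 1 :=
  Circle.norm_coe _

lemma abs_cosine_le_one (x : UnitAddCircle) (n : ℤ) : |cosine x n| ≤ 1 :=
  (Complex.abs_re_le_norm _).trans_eq (norm_fourier_apply n x)

lemma cosine_zero (x : UnitAddCircle) : cosine x 0 = 1 := by
  rw [cosine, fourier_zero, Complex.one_re]

lemma cosine_neg (x : UnitAddCircle) (n : ℤ) : cosine x (-n) = cosine x n := by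
  rw [cosine, cosine, fourier_neg, Complex.conj_re]

lemma fourier_add_fourier_neg (x : UnitAddCircle) (n : ℤ) :
    (fourier n x + fourier (-n) x : ℂ) = 2 * cosine x n := by
  rw [fourier_neg, Complex.add_conj, cosine]
  push_cast
  rfl

lemma norm_one_sub_fourier_le (x : UnitAddCircle) (n : ℕ) :
    ‖1 - (fourier (n : ℤ) x : ℂ)‖ ≤ n * ‖1 - (fourier 1 x : ℂ)‖ := by
  induction n with
  | zero => simp
  | succ n ih =>
    have hsplit : 1 - (fourier ((n + 1 : ℕ) : ℤ) x : ℂ) =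
        (1 - fourier (n : ℤ) x) + fourier (n : ℤ) x * (1 - fourier 1 x) := by
      rw [Nat.cast_succ, fourier_add]
      ring
    calc ‖1 - (fourier ((n + 1 : ℕ) : ℤ) x : ℂ)‖
        ≤ ‖1 - (fourier (n : ℤ) x : ℂ)‖ + ‖(fourier (n : ℤ) x : ℂ) * (1 - fourier 1 x)‖ := by
          rw [hsplit]
          exact norm_add_le _ _
      _ ≤ (n + 1 : ℕ) * ‖1 - (fourier 1 x : ℂ)‖ := by
          rw [norm_mul, norm_fourier_apply, Nat.cast_succ]
          linarith

lemma one_sub_cosine_eq (x : UnitAddCircle) (n : ℤ) :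
    1 - cosine x n = ‖1 - (fourier n x : ℂ)‖ ^ 2 / 2 := by
  have h := norm_sub_sq_real (1 : ℂ) (fourier n x)
  rw [norm_fourier_apply, norm_one, Complex.inner, map_one, mul_one] at h
  rw [h, cosine]
  ring

lemma one_sub_cosine_le (x : UnitAddCircle) (n : ℤ) :
    1 - cosine x n ≤ (n : ℝ) ^ 2 * (1 - cosine x 1) := by
  have hnat : ∀ m : ℕ, 1 - cosine x m ≤ (m : ℝ) ^ 2 * (1 - cosine x 1) := fun m => by
    rw [one_sub_cosine_eq, one_sub_cosine_eq, ← mul_div_assoc, ← mul_pow]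
    gcongr
    exact norm_one_sub_fourier_le x m
  obtain ⟨m, rfl | rfl⟩ := Int.eq_nat_or_neg n
  · exact_mod_cast hnat m
  · rw [cosine_neg]
    push_cast
    rw [neg_sq]
    exact hnat m

end Cosine

/-! ### The ball average and the lazy random walk as convolutions -/

section Kernels

variable {ι : Type*} [Fintype ι] [DecidableEq ι] {q N : ℝ}

lemma sum_units_mFourier_smul (z : UnitAddTorus ι) (y : ι → ℤ) :
    ∑ e : ι → ℤˣ, mFourier (e • y) z = 2 ^ Fintype.card ι * ∏ i, (cosine (z i) (y i) : ℂ) :=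
  calc ∑ e : ι → ℤˣ, mFourier (e • y) z
      = ∏ i, ∑ u : ℤˣ, (fourier (u • y i) (z i) : ℂ) := by
        rw [Finset.prod_univ_sum, Fintype.piFinset_univ]
        rfl
    _ = ∏ i, (2 * cosine (z i) (y i) : ℂ) := by
        refine Finset.prod_congr rfl fun i _ => ?_
        rw [UnitsInt.univ, Finset.sum_pair (by decide), one_smul, Units.neg_smul, one_smul,
          fourier_add_fourier_neg]
    _ = 2 ^ Fintype.card ι * ∏ i, (cosine (z i) (y i) : ℂ) := by
        rw [Finset.prod_mul_distrib, Finset.prod_const, Finset.card_univ]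

lemma units_smul_mem_powBall (hq : 1 ≤ q) {y : ι → ℤ} (hy : y ∈ powBall q Finset.univ N)
    (e : ι → ℤˣ) : e • y ∈ powBall q Finset.univ N := by
  have habs : ∀ i, |((e i • y i : ℤ) : ℝ)| = |(y i : ℝ)| := fun i => by
    rcases Int.units_eq_one_or (e i) with h | h <;> simp [h]
  simpa [mem_powBall hq, normPow, habs] using hy

lemma sum_powBall_mFourier (hq : 1 ≤ q) (N : ℝ) (z : UnitAddTorus ι) :
    ∑ y ∈ powBall q Finset.univ N, mFourier y z =
      ∑ y ∈ powBall q Finset.univ N, ∏ i, (cosine (z i) (y i) : ℂ) := by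
  have hinv : ∀ e : ι → ℤˣ, ∑ y ∈ powBall q Finset.univ N, mFourier (e • y) z =
      ∑ y ∈ powBall q Finset.univ N, mFourier y z := fun e =>
    Finset.sum_nbij' (e • ·) (e⁻¹ • ·) (fun _ hy => units_smul_mem_powBall hq hy e)
      (fun _ hy => units_smul_mem_powBall hq hy e⁻¹) (fun _ _ => inv_smul_smul e _)
      (fun _ _ => smul_inv_smul e _) fun _ _ => rfl
  refine mul_left_cancel₀ (pow_ne_zero (Fintype.card ι) (two_ne_zero (α := ℂ))) ?_
  calc (2 : ℂ) ^ Fintype.card ι * ∑ y ∈ powBall q Finset.univ N, mFourier y z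
      = ∑ e : ι → ℤˣ, ∑ y ∈ powBall q Finset.univ N, mFourier (e • y) z := by
        simp [hinv]
    _ = 2 ^ Fintype.card ι *
          ∑ y ∈ powBall q Finset.univ N, ∏ i, (cosine (z i) (y i) : ℂ) := by
        rw [Finset.sum_comm, Finset.mul_sum]
        exact Finset.sum_congr rfl fun y _ => sum_units_mFourier_smul z y

/-- The normalised indicator function of the lattice points in the `ℓ^q` ball of radius
`N ^ (1 / q)`. -/
noncomputable def ballKernel (q N : ℝ) : ℝ[ι → ℤ] :=
  restrict (powBall q Finset.univ N) fun _ => ((powBall q (Finset.univ : Finset ι) N).card : ℝ)⁻¹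

lemma coeff_ballKernel_nonneg (q N : ℝ) : 0 ≤ (ballKernel q N : ℝ[ι → ℤ]).coeff :=
  coeff_restrict_nonneg fun _ _ => by positivity

lemma trigPoly_ballKernel (hq : 1 ≤ q) (N : ℝ) (z : UnitAddTorus ι) :
    trigPoly z (ballKernel q N) = ballMean q N fun i => cosine (z i) := by
  rw [ballKernel, trigPoly_restrict, ← Finset.mul_sum, sum_powBall_mFourier hq, ballMean,
    Finset.expect_eq_sum_div_card, div_eq_inv_mul]
  push_cast
  rfl

/-- One step of the lazy simple random walk on the lattice: it rests with probability `1 / 2`. -/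
noncomputable def lazyWalk (ι : Type*) [Fintype ι] [DecidableEq ι] : ℝ[ι → ℤ] :=
  (1 / 2 : ℝ) • 1 + (1 / (4 * Fintype.card ι) : ℝ) •
    ∑ i : ι, (single (Pi.single i 1) 1 + single (-Pi.single i 1) 1)

lemma coeff_one_le_two_smul_lazyWalk :
    (1 : ℝ[ι → ℤ]).coeff ≤ ((2 : ℝ) • lazyWalk ι).coeff := by
  have hsteps : 0 ≤ (∑ i : ι, (single (Pi.single i 1) 1 + single (-Pi.single i 1) 1) :
      ℝ[ι → ℤ]).coeff := by
    rw [AddMonoidAlgebra.coeff_sum]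
    exact Finset.sum_nonneg fun i _ => add_nonneg (Finsupp.single_nonneg.mpr zero_le_one)
      (Finsupp.single_nonneg.mpr zero_le_one)
  have hsplit : (2 : ℝ) • lazyWalk ι = 1 + (2 * (1 / (4 * Fintype.card ι)) : ℝ) •
      ∑ i : ι, (single (Pi.single i 1) 1 + single (-Pi.single i 1) 1) := by
    rw [lazyWalk, smul_add, smul_smul, smul_smul, mul_one_div_cancel two_ne_zero, one_smul]
  rw [hsplit, AddMonoidAlgebra.coeff_add, AddMonoidAlgebra.coeff_smul]
  exact le_add_of_nonneg_right (smul_nonneg (by positivity) hsteps)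

lemma coeff_lazyWalk_nonneg : 0 ≤ (lazyWalk ι).coeff := fun x => by
  have hone : 0 ≤ (1 : ℝ[ι → ℤ]).coeff := Finsupp.single_nonneg.mpr zero_le_one
  have h := (hone.trans coeff_one_le_two_smul_lazyWalk) x
  rw [AddMonoidAlgebra.coeff_smul_apply] at h
  exact nonneg_of_mul_nonneg_right h two_pos

lemma reflect_lazyWalk : reflect (lazyWalk ι) = lazyWalk ι := by
  simp [lazyWalk, reflect_single, add_comm]

lemma trigPoly_lazyWalk [Nonempty ι] (z : UnitAddTorus ι) :
    trigPoly z (lazyWalk ι) = ((1 - meanDefect fun i => cosine (z i) 1 : ℝ) : ℂ) := by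
  have hstep : ∀ i, trigPoly z (single (Pi.single i 1) 1 + single (-Pi.single i 1) 1) =
      2 * (cosine (z i) 1 : ℂ) := fun i => by
    rw [map_add, trigPoly_single, trigPoly_single, mFourier_neg, mFourier_single, ← fourier_neg,
      Complex.ofReal_one, one_mul, one_mul, fourier_add_fourier_neg]
  have hcard : (Fintype.card ι : ℂ) ≠ 0 := Nat.cast_ne_zero.mpr Fintype.card_ne_zero
  rw [lazyWalk, map_add, map_smul, map_smul, map_one, map_sum, Complex.real_smul,
    Complex.real_smul, Finset.sum_congr rfl fun i _ => hstep i, ← Finset.mul_sum, meanDefect,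
    Fintype.expect_eq_sum_div_card, ← Finset.sum_div, Finset.sum_sub_distrib]
  push_cast
  simp only [Finset.sum_const, Finset.card_univ, nsmul_eq_mul]
  field_simp
  ring

lemma trigPoly_cesaro_lazyWalk [Nonempty ι] (z : UnitAddTorus ι) (n : ℕ) :
    trigPoly z (cesaro (lazyWalk ι) n) =
      (cesaro (1 - meanDefect fun i => cosine (z i) 1) n : ℝ) := by
  rw [map_cesaro, trigPoly_lazyWalk]
  exact (map_cesaro Complex.ofRealAm _ n).symm

lemma sqNorm_cesaro_lazyWalk_mul_le [Nonempty ι] (n : ℕ) (g : ℝ[ι → ℤ]) :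
    sqNorm (cesaro (lazyWalk ι) n * g) ≤ sqNorm g := by
  have hz : ∀ z : UnitAddTorus ι,
      ∑ _j ∈ {()}, ‖trigPoly z (cesaro (lazyWalk ι) n)‖ ^ 2 ≤ 1 := fun z => by
    have hcos : ∀ i, |cosine (z i) 1| ≤ 1 := fun i => abs_cosine_le_one _ _
    have hnonneg := cesaro_one_sub_nonneg (meanDefect_le_one hcos) n
    rw [Finset.sum_singleton, trigPoly_cesaro_lazyWalk, Complex.norm_of_nonneg hnonneg]
    exact pow_le_one₀ hnonneg
      (cesaro_one_sub_le_one (meanDefect_nonneg hcos) (meanDefect_le_one hcos) n)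
  simpa using sum_sqNorm_mul_le hz g

end Kernels

/-! ### The maximal inequality for lacunary sequences of balls -/

section LacunaryMaximal

variable {ι : Type*} [Fintype ι] [DecidableEq ι] {q : ℝ}

/-- The difference between a lazy step followed by the ball average and the Cesàro mean of the lazy
random walk of matching length. -/
noncomputable def errorKernel (q N : ℝ) : ℝ[ι → ℤ] :=
  ballKernel q N * lazyWalk ι - cesaro (lazyWalk ι) ⌊N⌋₊

lemma trigPoly_errorKernel [Nonempty ι] (hq : 1 ≤ q) (N : ℝ) (z : UnitAddTorus ι) :
    trigPoly z (errorKernel q N) = multiplierError q N fun i => cosine (z i) := by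
  rw [errorKernel, map_sub, map_mul, trigPoly_ballKernel hq, trigPoly_lazyWalk,
    trigPoly_cesaro_lazyWalk, multiplierError]
  push_cast
  rfl

lemma norm_sq_trigPoly_errorKernel_le {N : ℝ} (hq : 1 ≤ q) (hN1 : 1 ≤ N)
    (hN : N ≤ Fintype.card ι) (z : UnitAddTorus ι) :
    ‖trigPoly z (errorKernel q N)‖ ^ 2 ≤
      292 * (min (N * meanDefect fun i => cosine (z i) 1) (N * meanDefect fun i => cosine (z i) 1)⁻¹
        + N / Fintype.card ι) := by
  have hcard : 0 < (Fintype.card ι : ℝ) := by linarith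
  have : Nonempty ι := Fintype.card_pos_iff.mp (by exact_mod_cast hcard)
  have hcos : ∀ i n, |cosine (z i) n| ≤ 1 := fun i => abs_cosine_le_one (z i)
  have htwo := abs_multiplierError_le_two hq (zero_le_one.trans hN1) hcos
  have hmin := abs_multiplierError_le_min_add hq hN1 hN hcos (fun i => cosine_zero (z i))
    (fun i => cosine_neg (z i) 1) fun i => one_sub_cosine_le (z i)
  rw [trigPoly_errorKernel hq, Complex.norm_real, Real.norm_eq_abs, sq]
  calc _ ≤ 2 * |multiplierError q N fun i => cosine (z i)| := by gcongr
    _ ≤ _ := by linarith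

variable {N : ℕ → ℝ}

lemma sum_norm_sq_trigPoly_errorKernel_le (hq : 1 ≤ q) (hN1 : ∀ j, 1 ≤ N j)
    (hlac : ∀ j, 2 * N j ≤ N (j + 1)) {m : ℕ} (hN : ∀ j ≤ m, N j ≤ Fintype.card ι)
    (z : UnitAddTorus ι) :
    ∑ j ∈ Finset.range (m + 1), ‖trigPoly z (errorKernel q (N j))‖ ^ 2 ≤ 2336 := by
  have hN0 : ∀ j, 0 ≤ N j := fun j => zero_le_one.trans (hN1 j)
  have hcard : 0 < (Fintype.card ι : ℝ) := zero_lt_one.trans_le ((hN1 m).trans (hN m le_rfl))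
  set lam := meanDefect fun i => cosine (z i) 1
  have hlam : 0 ≤ lam := meanDefect_nonneg fun i => abs_cosine_le_one _ _
  have hmin : ∑ j ∈ Finset.range (m + 1), min (N j * lam) (N j * lam)⁻¹ ≤ 6 :=
    sum_min_inv_le_six (fun j => mul_nonneg (hN0 j) hlam)
      (fun j => by rw [← mul_assoc]; exact mul_le_mul_of_nonneg_right (hlac j) hlam) _
  have hdim : ∑ j ∈ Finset.range (m + 1), N j / Fintype.card ι ≤ 2 := by
    rw [← Finset.sum_div, div_le_iff₀ hcard]
    linarith [sum_range_succ_le_two_mul hN0 hlac m, hN m le_rfl]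
  calc ∑ j ∈ Finset.range (m + 1), ‖trigPoly z (errorKernel q (N j))‖ ^ 2
      ≤ ∑ j ∈ Finset.range (m + 1),
          292 * (min (N j * lam) (N j * lam)⁻¹ + N j / Fintype.card ι) :=
        Finset.sum_le_sum fun j hj => norm_sq_trigPoly_errorKernel_le hq (hN1 j)
          (hN j (Finset.mem_range_succ_iff.mp hj)) z
    _ ≤ 2336 := by
        rw [← Finset.mul_sum, Finset.sum_add_distrib]
        linarith

lemma sum_sq_coeff_errorKernel_mul_le (hq : 1 ≤ q) (hN1 : ∀ j, 1 ≤ N j)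
    (hlac : ∀ j, 2 * N j ≤ N (j + 1)) {X : Finset (ι → ℤ)} {s : (ι → ℤ) → ℕ}
    (hs : ∀ x ∈ X, N (s x) ≤ Fintype.card ι) (f : ℝ[ι → ℤ]) :
    ∑ x ∈ X, (errorKernel q (N (s x)) * f).coeff x ^ 2 ≤ 2336 * sqNorm f := by
  rcases X.eq_empty_or_nonempty with rfl | hX
  · simpa using sqNorm_nonneg f
  obtain ⟨x₀, hx₀, hmax⟩ := X.exists_max_image s hX
  have hmono : Monotone N := monotone_nat_of_le_succ fun j => by linarith [hlac j, hN1 j]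
  have hN : ∀ j ≤ s x₀, N j ≤ Fintype.card ι := fun j hj => (hmono hj).trans (hs x₀ hx₀)
  calc ∑ x ∈ X, (errorKernel q (N (s x)) * f).coeff x ^ 2
      ≤ ∑ x ∈ X, ∑ j ∈ Finset.range (s x₀ + 1), (errorKernel q (N j) * f).coeff x ^ 2 :=
        Finset.sum_le_sum fun x hx =>
          Finset.single_le_sum (f := fun j => (errorKernel q (N j) * f).coeff x ^ 2)
            (fun _ _ => sq_nonneg _) (Finset.mem_range_succ_iff.mpr (hmax x hx))
    _ = ∑ j ∈ Finset.range (s x₀ + 1), ∑ x ∈ X, (errorKernel q (N j) * f).coeff x ^ 2 := by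
        rw [Finset.sum_comm]
    _ ≤ ∑ j ∈ Finset.range (s x₀ + 1), sqNorm (errorKernel q (N j) * f) :=
        Finset.sum_le_sum fun j _ => sum_sq_coeff_le_sqNorm _ X
    _ ≤ 2336 * sqNorm f :=
        sum_sqNorm_mul_le (w := fun j => errorKernel q (N j))
          (sum_norm_sq_trigPoly_errorKernel_le hq hN1 hlac hN) f

lemma coeff_ballKernel_mul_le (q N : ℝ) {f : ℝ[ι → ℤ]} (hf : 0 ≤ f.coeff) (x : ι → ℤ) :
    (ballKernel q N * f).coeff x ≤
      2 * ((errorKernel q N * f).coeff x + (cesaro (lazyWalk ι) ⌊N⌋₊ * f).coeff x) := by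
  have hlazy := coeff_mul_le_coeff_mul_right coeff_one_le_two_smul_lazyWalk
    (coeff_mul_nonneg (coeff_ballKernel_nonneg q N) hf) x
  have hsplit : lazyWalk ι * (ballKernel q N * f) =
      errorKernel q N * f + cesaro (lazyWalk ι) ⌊N⌋₊ * f := by
    rw [errorKernel]
    ring
  rwa [one_mul, smul_mul_assoc, AddMonoidAlgebra.coeff_smul_apply, hsplit,
    AddMonoidAlgebra.coeff_add, Finsupp.add_apply] at hlazy

theorem sum_sq_coeff_ballKernel_mul_le [Nonempty ι] (hq : 1 ≤ q) (hN1 : ∀ j, 1 ≤ N j)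
    (hlac : ∀ j, 2 * N j ≤ N (j + 1)) {X : Finset (ι → ℤ)} {s : (ι → ℤ) → ℕ}
    (hs : ∀ x ∈ X, N (s x) ≤ Fintype.card ι) {f : ℝ[ι → ℤ]} (hf : 0 ≤ f.coeff) :
    ∑ x ∈ X, (ballKernel q (N (s x)) * f).coeff x ^ 2 ≤ 138 ^ 2 * sqNorm f := by
  have herror := sum_sq_coeff_errorKernel_mul_le hq hN1 hlac hs f
  have hcesaro := isMaximalBound_cesaro coeff_lazyWalk_nonneg reflect_lazyWalk
    sqNorm_cesaro_lazyWalk_mul_le (Fintype.card ι) f hf X (fun x => ⌊N (s x)⌋₊)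
    fun x hx => ⟨Nat.floor_pos.mpr (hN1 _), Nat.floor_le_of_le (hs x hx)⟩
  have hpoint : ∀ x, (ballKernel q (N (s x)) * f).coeff x ^ 2 ≤
      8 * ((errorKernel q (N (s x)) * f).coeff x ^ 2 +
        (cesaro (lazyWalk ι) ⌊N (s x)⌋₊ * f).coeff x ^ 2) := fun x => by
    have h0 := coeff_mul_nonneg (coeff_ballKernel_nonneg q (N (s x))) hf x
    refine (pow_le_pow_left₀ h0 (coeff_ballKernel_mul_le q _ hf x) 2).trans ?_
    rw [mul_pow]
    linarith [add_sq_le (a := (errorKernel q (N (s x)) * f).coeff x)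
      (b := (cesaro (lazyWalk ι) ⌊N (s x)⌋₊ * f).coeff x)]
  calc ∑ x ∈ X, (ballKernel q (N (s x)) * f).coeff x ^ 2
      ≤ ∑ x ∈ X, 8 * ((errorKernel q (N (s x)) * f).coeff x ^ 2 +
          (cesaro (lazyWalk ι) ⌊N (s x)⌋₊ * f).coeff x ^ 2) :=
        Finset.sum_le_sum fun x _ => hpoint x
    _ ≤ 138 ^ 2 * sqNorm f := by
        rw [← Finset.mul_sum, Finset.sum_add_distrib]
        linarith [sqNorm_nonneg f]

end LacunaryMaximal

/-! ### Dyadic averages of arbitrary functions -/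

section Dyadic

variable {q t : ℝ} {d : ℕ}

lemma latticeBall_eq_powBall (hq : 1 ≤ q) (ht : 0 ≤ t) :
    latticeBall q d t = powBall q Finset.univ (t ^ q) := by
  ext y
  simp only [mem_powBall hq, latticeBall, Finset.mem_filter, Finset.mem_Icc, Finset.mem_univ,
    not_true_eq_false, false_imp_iff, imp_true_iff, and_true, normPow, and_iff_right_iff_imp]
  intro hy
  have hbox : ∀ i, |y i| ≤ (⌈t⌉₊ : ℤ) := fun i => by
    have hi : |(y i : ℝ)| ≤ t := (Real.rpow_le_rpow_iff (abs_nonneg _) ht (by linarith)).mp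
      ((abs_rpow_le_normPow q y i).trans hy)
    exact_mod_cast hi.trans (Nat.le_ceil t)
  exact ⟨fun i => (abs_le.mp (hbox i)).1, fun i => (abs_le.mp (hbox i)).2⟩

lemma norm_avgOp_le (hq : 1 ≤ q) (ht : 0 ≤ t) {f : (Fin d → ℤ) → ℂ} {x : Fin d → ℤ}
    {T : Finset (Fin d → ℤ)} (hT : ∀ y ∈ latticeBall q d t, x - y ∈ T) :
    ‖avgOp q d t f x‖ ≤ (ballKernel q (t ^ q) * restrict T (‖f ·‖)).coeff x := by
  rw [ballKernel, coeff_restrict_mul, ← latticeBall_eq_powBall hq ht, ← Finset.mul_sum, avgOp,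
    norm_mul, norm_inv, Complex.norm_natCast]
  gcongr
  refine (norm_sum_le _ _).trans_eq (Finset.sum_congr rfl fun y hy => ?_)
  rw [coeff_restrict, if_pos (hT y hy)]

lemma two_pow_rpow_two_mul_le (hq : 1 ≤ q) (j : ℕ) :
    2 * ((2 : ℝ) ^ j) ^ q ≤ ((2 : ℝ) ^ (j + 1)) ^ q := by
  rw [pow_succ', Real.mul_rpow zero_le_two (by positivity)]
  gcongr
  exact Real.self_le_rpow_of_one_le one_le_two hq

lemma exists_sum_sq_norm_avgOp_le (hq : 1 ≤ q) (hd : 0 < d) (f : (Fin d → ℤ) → ℂ)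
    (X : Finset (Fin d → ℤ)) {s : (Fin d → ℤ) → ℕ}
    (hs : ∀ x ∈ X, (2 : ℝ) ^ s x ≤ (d : ℝ) ^ (1 / q)) :
    ∃ T : Finset (Fin d → ℤ),
      ∑ x ∈ X, ‖avgOp q d (2 ^ s x) f x‖₊ ^ 2 ≤ 138 ^ 2 * ∑ x ∈ T, ‖f x‖₊ ^ 2 := by
  have : Nonempty (Fin d) := Fin.pos_iff_nonempty.mp hd
  have hq0 : 0 < q := by linarith
  have hsd : ∀ x ∈ X, ((2 : ℝ) ^ s x) ^ q ≤ Fintype.card (Fin d) := fun x hx => by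
    rw [Fintype.card_fin, ← Real.le_rpow_inv_iff_of_pos (by positivity) (by positivity) hq0,
      ← one_div]
    exact hs x hx
  let T := X.biUnion fun x => (latticeBall q d (2 ^ s x)).image (x - ·)
  have hT : ∀ x ∈ X, ∀ y ∈ latticeBall q d (2 ^ s x), x - y ∈ T := fun x hx y hy =>
    Finset.mem_biUnion.mpr ⟨x, hx, Finset.mem_image_of_mem _ hy⟩
  refine ⟨T, NNReal.coe_le_coe.mp ?_⟩
  push_cast
  calc ∑ x ∈ X, ‖avgOp q d (2 ^ s x) f x‖ ^ 2
      ≤ ∑ x ∈ X, (ballKernel q ((2 ^ s x) ^ q) * restrict T (‖f ·‖)).coeff x ^ 2 := by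
        gcongr with x hx
        exact norm_avgOp_le hq (by positivity) (hT x hx)
    _ ≤ 138 ^ 2 * sqNorm (restrict T (‖f ·‖)) :=
        sum_sq_coeff_ballKernel_mul_le (N := fun j => (2 ^ j) ^ q) hq
          (fun j => Real.one_le_rpow (one_le_pow₀ one_le_two) hq0.le) (two_pow_rpow_two_mul_le hq)
          hsd (coeff_restrict_nonneg fun _ _ => norm_nonneg _)
    _ = 138 ^ 2 * ∑ x ∈ T, ‖f x‖ ^ 2 := by rw [sqNorm_restrict]

lemma exists_isMaxOn_two_pow_le {R : ℝ} (hR : 1 ≤ R) (g : ℕ → ℝ≥0∞) :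
    ∃ s, (2 : ℝ) ^ s ≤ R ∧ ∀ n, (2 : ℝ) ^ n ≤ R → g n ≤ g s := by
  have hfin : {n : ℕ | (2 : ℝ) ^ n ≤ R}.Finite := by
    refine (Set.finite_Iio ⌈R⌉₊).subset fun n (hn : (2 : ℝ) ^ n ≤ R) =>
      Nat.lt_ceil.mpr (lt_of_lt_of_le ?_ hn)
    exact_mod_cast n.lt_two_pow_self
  exact Set.exists_max_image {n : ℕ | (2 : ℝ) ^ n ≤ R} g hfin ⟨0, (pow_zero (2 : ℝ)).trans_le hR⟩

lemma l2Norm_le_mul_of_forall_finset {C : ℝ≥0∞} {g h : (Fin d → ℤ) → ℝ≥0∞}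
    (H : ∀ X : Finset (Fin d → ℤ), ∃ T : Finset (Fin d → ℤ),
      ∑ x ∈ X, g x ^ (2 : ℝ) ≤ C ^ (2 : ℝ) * ∑ x ∈ T, h x ^ (2 : ℝ)) :
    l2Norm g ≤ C * l2Norm h := by
  have hsq : ∑' x, g x ^ (2 : ℝ) ≤ C ^ (2 : ℝ) * ∑' x, h x ^ (2 : ℝ) := by
    rw [ENNReal.tsum_eq_iSup_sum]
    refine iSup_le fun X => ?_
    obtain ⟨T, hT⟩ := H X
    exact hT.trans (mul_le_mul_right (ENNReal.sum_le_tsum T) _)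
  calc l2Norm g ≤ (C ^ (2 : ℝ) * ∑' x, h x ^ (2 : ℝ)) ^ (1 / 2 : ℝ) :=
        ENNReal.rpow_le_rpow hsq (by norm_num)
    _ = C * l2Norm h := by
        rw [ENNReal.mul_rpow_of_nonneg _ _ (by norm_num), ← ENNReal.rpow_mul, l2Norm]
        norm_num

end Dyadic

theorem stmt2 :
    ∃ C : ℝ≥0, 0 < C ∧ ∀ (q : ℝ), 1 ≤ q → ∀ d : ℕ, 0 < d → ∀ f : (Fin d → ℤ) → ℂ,
      l2Norm (fun x => ⨆ (n : ℕ) (_ : (2 : ℝ) ^ n ≤ (d : ℝ) ^ (1 / q)),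
          (‖avgOp q d ((2 : ℝ) ^ n) f x‖₊ : ℝ≥0∞))
        ≤ (C : ℝ≥0∞) * l2Norm (fun x => (‖f x‖₊ : ℝ≥0∞)) := by
  refine ⟨138, by norm_num, fun q hq d hd f => l2Norm_le_mul_of_forall_finset fun X => ?_⟩
  have hR : 1 ≤ (d : ℝ) ^ (1 / q) :=
    Real.one_le_rpow (by exact_mod_cast hd) (by positivity)
  choose s hs hmax using fun x =>
    exists_isMaxOn_two_pow_le hR fun n => (‖avgOp q d ((2 : ℝ) ^ n) f x‖₊ : ℝ≥0∞)
  obtain ⟨T, hT⟩ := exists_sum_sq_norm_avgOp_le hq hd f X fun x _ => hs x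
  refine ⟨T, ?_⟩
  calc ∑ x ∈ X, (⨆ (n : ℕ) (_ : (2 : ℝ) ^ n ≤ (d : ℝ) ^ (1 / q)),
          (‖avgOp q d ((2 : ℝ) ^ n) f x‖₊ : ℝ≥0∞)) ^ (2 : ℝ)
      ≤ ∑ x ∈ X, (‖avgOp q d (2 ^ s x) f x‖₊ : ℝ≥0∞) ^ (2 : ℝ) := by
        gcongr with x
        exact iSup₂_le (hmax x)
    _ ≤ ((138 : ℝ≥0) : ℝ≥0∞) ^ (2 : ℝ) * ∑ x ∈ T, (‖f x‖₊ : ℝ≥0∞) ^ (2 : ℝ) := by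
        simp only [ENNReal.rpow_two]
        exact_mod_cast hT
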